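/- arXiv:2502.00845 — 4 statements merged into one kernel-verified Lean document; each statement's English description precedes it below -/
import Mathlib

section
/- Let m > 1 be an integer with m ≡ 0 (mod 4) and let ε > 0. There exist a constant c > 0 and a real number X₀ such that for all real X ≥ X₀, the number of negative squarefree integers d such that the absolute value of the discriminant of the imaginary quadratic field ℚ(√d) is at most X and the ideal class group Cl(ℚ(√d)) contains an element of order m is at least c · X^(1/2 + 2/m − ε). -/
open NumberField

/-- `d` is a negative squarefree integer such that the imaginary quadratic field
`ℚ(√d)` (characterized as a degree-2 number field containing a square root of `d`)
has `|discriminant| ≤ X` and its ideal class group contains an element of order `m`. -/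
def GoodOrderM (m : ℕ) (X : ℝ) (d : ℤ) : Prop :=
  d < 0 ∧ Squarefree d ∧
  ∀ (K : Type) [Field K] [NumberField K],
    (∃ x : K, x * x = (d : K)) → Module.finrank ℚ K = 2 →
      (|NumberField.discr K| : ℝ) ≤ X ∧
      ∃ g : ClassGroup (𝓞 K), orderOf g = m

/-!
Write `m = 4 * k`. For a prime `q ≥ 5` and `0 < t ≤ q ^ k` such that `d = t ^ 2 - 2 * q ^ (2 * k)`
is squarefree, put `𝔮 = (q, t + √d)` and `𝔭 = (2, t + √d)`. The factorization
`(t + √d) * (t - √d) = 2 * q ^ (2 * k)` yields `𝔮 ^ (2 * k) * 𝔭 = (t + √d)` and `𝔭 ^ 2 = (2)`, so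
the class of `𝔮` is killed by `4 * k`. An algebraic integer of `ℚ(√d)` outside `ℤ` has norm at least
`|d| / 4`, so if `𝔭` or `𝔮 ^ j` with `0 < j < 2 * k` were principal, it would be generated by a
rational integer. For `𝔭` this fails because its norm `2` is not a square, for `𝔮 ^ j` because `q`
does not divide `t + √d`. Hence the class of `𝔮` has order exactly `4 * k`.

To count the radicands `d`, let `A ^ (2 * k) = X / 8` and take about `A ^ (1 - 2 * δ)` primes `q` in
`(A ^ (1 - δ), A]`. Sieving by the squares of primes leaves a positive proportion of the `q ^ k`
values `d` attached to `q`. If `d` arises from both `(q, t)` and `(r, s)`, then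
`(t - s) * (t + s) = 2 * (q ^ (2 * k) - r ^ (2 * k))`, so by the divisor bound two primes share only
`O(A ^ δ)` radicands. The number of distinct `d` is therefore at least `A ^ (k + 1 - O(δ))`, which
is `X ^ (1 / 2 + 2 / m - O(δ))`.
-/

section QuadraticBasis

variable {R S : Type*} [CommRing R] [CommRing S] [Algebra R S]
  {b : Module.Basis (Fin 2) R S} {d : R}

theorem leftMulMatrix_algebraMap_add_smul (h0 : b 0 = 1) (h1 : b 1 * b 1 = algebraMap R S d)
    (r s : R) : Algebra.leftMulMatrix b (algebraMap R S r + s • b 1) = !![r, s * d; s, r] := by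
  have e0 : (algebraMap R S r + s • b 1) * b 0 = r • b 0 + s • b 1 := by
    rw [h0, mul_one, ← Algebra.algebraMap_eq_smul_one]
  have e1 : (algebraMap R S r + s • b 1) * b 1 = (s * d) • b 0 + r • b 1 := by
    rw [add_mul, smul_mul_assoc, h1, h0, ← Algebra.smul_def, Algebra.algebraMap_eq_smul_one,
      smul_smul, add_comm]
  ext i j
  rw [Algebra.leftMulMatrix_eq_repr_mul]
  fin_cases i <;> fin_cases j <;> simp [e0, e1]

theorem norm_algebraMap_add_smul (h0 : b 0 = 1) (h1 : b 1 * b 1 = algebraMap R S d) (r s : R) :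
    Algebra.norm R (algebraMap R S r + s • b 1) = r ^ 2 - d * s ^ 2 := by
  rw [Algebra.norm_eq_matrix_det b, leftMulMatrix_algebraMap_add_smul h0 h1, Matrix.det_fin_two_of]
  ring

theorem trace_algebraMap_add_smul (h0 : b 0 = 1) (h1 : b 1 * b 1 = algebraMap R S d) (r s : R) :
    Algebra.trace R S (algebraMap R S r + s • b 1) = 2 * r := by
  rw [Algebra.trace_eq_matrix_trace b, leftMulMatrix_algebraMap_add_smul h0 h1,
    Matrix.trace_fin_two_of, two_mul]

end QuadraticBasis

theorem exists_algebraMap_eq_of_squarefree_mul_sq {R F : Type*} [CommRing R] [IsDomain R]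
    [UniqueFactorizationMonoid R] [Field F] [Algebra R F] [IsFractionRing R F] {d n : R}
    (hd : Squarefree d) {s : F} (h : algebraMap R F d * s ^ 2 = algebraMap R F n) :
    ∃ b : R, algebraMap R F b = s := by
  have hint : IsIntegral R (algebraMap R F d * s) := by
    refine .of_pow two_pos ?_
    rw [mul_pow, sq (algebraMap R F d), mul_assoc, h, ← map_mul]
    exact isIntegral_algebraMap
  obtain ⟨c, hc⟩ := IsIntegrallyClosed.isIntegral_iff.mp hint
  have hdc : d ∣ c ^ 2 := by
    refine ⟨n, IsFractionRing.injective R F ?_⟩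
    rw [map_pow, hc, map_mul, ← h]
    ring
  obtain ⟨b, rfl⟩ := (hd.dvd_pow_iff_dvd two_ne_zero).mp hdc
  refine ⟨b, mul_left_cancel₀ ?_ ((map_mul (algebraMap R F) d b).symm.trans hc)⟩
  exact (map_ne_zero_iff _ (IsFractionRing.injective R F)).mpr hd.ne_zero

theorem discr_dvd_discr {R S ι : Type*} [CommRing R] [CommRing S] [Algebra R S] [Fintype ι]
    [DecidableEq ι] {v w : ι → S} (h : ∀ i, v i ∈ Submodule.span R (Set.range w)) :
    Algebra.discr R w ∣ Algebra.discr R v := by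
  choose c hc using fun i ↦ (Submodule.mem_span_range_iff_exists_fun R).mp (h i)
  have hv : v = ((Matrix.of c).map (algebraMap R S)).mulVec w := by
    ext i
    simp [← hc i, Matrix.mulVec, dotProduct, Algebra.smul_def]
  rw [hv, Algebra.discr_of_matrix_mulVec]
  exact dvd_mul_left _ _

theorem discr_smul {R S ι : Type*} [CommRing R] [CommRing S] [Algebra R S] [Fintype ι]
    [DecidableEq ι] (c : R) (w : ι → S) :
    Algebra.discr R (c • w) = (c ^ Fintype.card ι) ^ 2 * Algebra.discr R w := by
  have : c • w = ((Matrix.scalar ι c).map (algebraMap R S)).mulVec w := by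
    ext i
    simp [Matrix.mulVec, dotProduct, Algebra.smul_def, Matrix.diagonal_apply, apply_ite]
  rw [this, Algebra.discr_of_matrix_mulVec]
  simp

section QuadraticField

variable {K : Type*} [Field K] [NumberField K] {d : ℤ} {x : 𝓞 K}

theorem exists_basis_one_sqrt (hd : ¬IsSquare d) (hx : x * x = d) (h2 : Module.finrank ℚ K = 2) :
    ∃ b : Module.Basis (Fin 2) ℚ K, b 0 = 1 ∧ b 1 = x := by
  have hxK : (x : K) * x = d := by simpa using congrArg (algebraMap (𝓞 K) K) hx
  have hind : LinearIndependent ℚ ![(1 : K), x] := by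
    rw [LinearIndependent.pair_iff' one_ne_zero]
    intro r hr
    rw [← hr] at hxK
    refine hd (Rat.isSquare_intCast_iff.mp ⟨r, (algebraMap ℚ K).injective ?_⟩)
    simpa [Algebra.smul_def] using hxK.symm
  exact ⟨basisOfLinearIndependentOfCardEqFinrank hind (by simp [h2]), by simp, by simp⟩

theorem norm_intCast_add_intCast_mul (hd : ¬IsSquare d) (hx : x * x = d)
    (h2 : Module.finrank ℚ K = 2) (a b : ℤ) :
    Algebra.norm ℤ (a + b * x : 𝓞 K) = a ^ 2 - d * b ^ 2 := by
  obtain ⟨B, h0, h1⟩ := exists_basis_one_sqrt hd hx h2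
  have h : ((a + b * x : 𝓞 K) : K) = algebraMap ℚ K a + (b : ℚ) • B 1 := by
    simp [h1, Algebra.smul_def]
  have h' := Algebra.coe_norm_int (a + b * x : 𝓞 K)
  rw [h, norm_algebraMap_add_smul (d := (d : ℚ)) h0
    (by rw [h1]; simpa using congrArg (algebraMap (𝓞 K) K) hx)] at h'
  exact_mod_cast h'

theorem trace_intCast_add_intCast_mul (hd : ¬IsSquare d) (hx : x * x = d)
    (h2 : Module.finrank ℚ K = 2) (a b : ℤ) :
    Algebra.trace ℤ (𝓞 K) (a + b * x) = 2 * a := by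
  obtain ⟨B, h0, h1⟩ := exists_basis_one_sqrt hd hx h2
  have h : ((a + b * x : 𝓞 K) : K) = algebraMap ℚ K a + (b : ℚ) • B 1 := by
    simp [h1, Algebra.smul_def]
  have h' := Algebra.coe_trace_int (a + b * x : 𝓞 K)
  rw [h, trace_algebraMap_add_smul (d := (d : ℚ)) h0
    (by rw [h1]; simpa using congrArg (algebraMap (𝓞 K) K) hx)] at h'
  exact_mod_cast h'

theorem exists_two_mul_eq_intCast_add_intCast_mul (hd : ¬IsSquare d) (hsq : Squarefree d)
    (hx : x * x = d) (h2 : Module.finrank ℚ K = 2) (z : 𝓞 K) :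
    ∃ a b : ℤ, 2 * z = a + b * x := by
  obtain ⟨B, h0, h1⟩ := exists_basis_one_sqrt hd hx h2
  have hBd : B 1 * B 1 = algebraMap ℚ K d := by
    rw [h1]; simpa using congrArg (algebraMap (𝓞 K) K) hx
  obtain ⟨r, s, hz⟩ : ∃ r s : ℚ, (z : K) = algebraMap ℚ K r + s • B 1 :=
    ⟨B.repr z 0, B.repr z 1, by
      simpa [Fin.sum_univ_two, h0, Algebra.smul_def] using (B.sum_repr (z : K)).symm⟩
  have hN : (Algebra.norm ℤ z : ℚ) = r ^ 2 - d * s ^ 2 := by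
    rw [Algebra.coe_norm_int, hz, norm_algebraMap_add_smul h0 hBd]
  have hT : (Algebra.trace ℤ (𝓞 K) z : ℚ) = 2 * r := by
    rw [Algebra.coe_trace_int, hz, trace_algebraMap_add_smul h0 hBd]
  obtain ⟨b, hb⟩ := exists_algebraMap_eq_of_squarefree_mul_sq (F := ℚ) hsq (s := 2 * s)
    (n := Algebra.trace ℤ (𝓞 K) z ^ 2 - 4 * Algebra.norm ℤ z) (by simp [hN, hT]; ring)
  refine ⟨Algebra.trace ℤ (𝓞 K) z, b, RingOfIntegers.coe_injective ?_⟩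
  have hT' := congrArg (algebraMap ℚ K) hT
  have hb' := congrArg (algebraMap ℚ K) hb
  simp only [map_intCast, map_mul, map_ofNat, eq_intCast] at hT' hb'
  simp only [map_add, map_mul, map_intCast, map_ofNat, hT', hb', hz, h1, Algebra.smul_def]
  ring

theorem discr_one_sqrt (hd : ¬IsSquare d) (hx : x * x = d) (h2 : Module.finrank ℚ K = 2) :
    Algebra.discr ℤ ![1, x] = 4 * d := by
  have htr (a b : ℤ) := trace_intCast_add_intCast_mul hd hx h2 a b
  have h1 : Algebra.trace ℤ (𝓞 K) 1 = 2 := by simpa using htr 1 0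
  have hx0 : Algebra.trace ℤ (𝓞 K) x = 0 := by simpa using htr 0 1
  have hd' : Algebra.trace ℤ (𝓞 K) d = 2 * d := by simpa using htr d 0
  rw [Algebra.discr_def, Matrix.det_fin_two]
  simp [Algebra.traceMatrix_apply, Algebra.traceForm_apply, h1, hx0, hd', hx]
  ring

theorem exists_ringOfIntegers_basis_fin_two (h2 : Module.finrank ℚ K = 2) :
    ∃ w : Module.Basis (Fin 2) ℤ (𝓞 K), Algebra.discr ℤ w = discr K :=
  have w := Module.finBasisOfFinrankEq ℤ (𝓞 K) ((RingOfIntegers.rank K).trans h2)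
  ⟨w, discr_eq_discr K w⟩

theorem discr_dvd_four_mul (hd : ¬IsSquare d) (hx : x * x = d) (h2 : Module.finrank ℚ K = 2) :
    discr K ∣ 4 * d := by
  obtain ⟨w, hw⟩ := exists_ringOfIntegers_basis_fin_two h2
  rw [← hw, ← discr_one_sqrt hd hx h2]
  exact discr_dvd_discr fun i ↦ w.span_eq ▸ Submodule.mem_top

theorem dvd_four_mul_discr (hd : ¬IsSquare d) (hsq : Squarefree d) (hx : x * x = d)
    (h2 : Module.finrank ℚ K = 2) : d ∣ 4 * discr K := by
  obtain ⟨w, hw⟩ := exists_ringOfIntegers_basis_fin_two h2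
  have h : Algebra.discr ℤ ![1, x] ∣ Algebra.discr ℤ ((2 : ℤ) • ⇑w) := by
    refine discr_dvd_discr fun i ↦ ?_
    obtain ⟨a, b, hab⟩ := exists_two_mul_eq_intCast_add_intCast_mul hd hsq hx h2 (w i)
    rw [Matrix.range_cons_cons_empty, Submodule.mem_span_pair]
    exact ⟨a, b, by simp [hab]⟩
  rw [discr_smul, discr_one_sqrt hd hx h2, hw, Fintype.card_fin] at h
  rw [← mul_dvd_mul_iff_left (four_ne_zero (α := ℤ)), ← mul_assoc]
  exact h

theorem exists_eq_intCast_of_four_mul_norm_lt (hd : d < 0) (hsq : Squarefree d) (hx : x * x = d)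
    (h2 : Module.finrank ℚ K = 2) {z : 𝓞 K} (hz : 4 * Algebra.norm ℤ z < -d) :
    ∃ a : ℤ, z = a := by
  have hd' : ¬IsSquare d := not_isSquare_of_neg hd
  obtain ⟨a, b, hab⟩ := exists_two_mul_eq_intCast_add_intCast_mul hd' hsq hx h2 z
  have hN : 4 * Algebra.norm ℤ z = a ^ 2 - d * b ^ 2 := by
    rw [← norm_intCast_add_intCast_mul hd' hx h2, ← hab, map_mul, ← Int.cast_ofNat (R := 𝓞 K),
      ← eq_intCast (algebraMap ℤ (𝓞 K)), Algebra.norm_algebraMap, RingOfIntegers.rank, h2]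
    norm_num
  obtain rfl : b = 0 := by
    by_contra hb
    have hb2 : 1 ≤ b ^ 2 := Int.add_one_le_iff.mpr (sq_pos_of_ne_zero hb)
    nlinarith [sq_nonneg a]
  obtain ⟨c, rfl⟩ : 2 ∣ a :=
    Int.prime_two.dvd_of_dvd_pow (n := 2) ⟨2 * Algebra.norm ℤ z, by linarith⟩
  refine ⟨c, mul_left_cancel₀ (two_ne_zero (α := 𝓞 K)) ?_⟩
  simpa using hab

theorem absNorm_span_intCast (h2 : Module.finrank ℚ K = 2) (a : ℤ) :
    (Ideal.absNorm (Ideal.span {(a : 𝓞 K)}) : ℤ) = a ^ 2 := by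
  rw [Ideal.absNorm_span_singleton, ← eq_intCast (algebraMap ℤ (𝓞 K)), Algebra.norm_algebraMap,
    RingOfIntegers.rank, h2]
  simp

theorem exists_eq_span_intCast_of_isPrincipal (hd : d < 0) (hsq : Squarefree d) (hx : x * x = d)
    (h2 : Module.finrank ℚ K = 2) {I : Ideal (𝓞 K)} (hI : I.IsPrincipal)
    (hnorm : 4 * (Ideal.absNorm I : ℤ) < -d) :
    ∃ a : ℤ, I = Ideal.span {(a : 𝓞 K)} ∧ a ^ 2 = Ideal.absNorm I := by
  obtain ⟨z, rfl⟩ := hI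
  rw [Ideal.submodule_span_eq, Ideal.absNorm_span_singleton] at hnorm
  obtain ⟨a, rfl⟩ := exists_eq_intCast_of_four_mul_norm_lt hd hsq hx h2
    (z := z) (by have := Int.le_natAbs (a := Algebra.norm ℤ z); omega)
  exact ⟨a, rfl, (absNorm_span_intCast h2 a).symm⟩

end QuadraticField

section SpanPair

variable {R : Type*} [CommRing R] {a b α β : R}

theorem span_pair_mul_span_pair_eq_span_pair_mul (hcop : IsCoprime (α + β) b)
    (h : a * b ∣ α * β) :
    Ideal.span {a, α} * Ideal.span {b, α} = Ideal.span {a * b, α} := by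
  obtain ⟨u, v, huv⟩ := hcop
  obtain ⟨c, hc⟩ := h
  rw [Ideal.span_pair_mul_span_pair]
  refine le_antisymm ?_ ?_ <;>
    simp only [Ideal.span_le, Set.insert_subset_iff, Set.singleton_subset_iff, SetLike.mem_coe]
  · simp only [Ideal.mem_span_pair]
    exact ⟨⟨1, 0, by ring⟩, ⟨0, a, by ring⟩, ⟨0, b, by ring⟩, ⟨0, α, by ring⟩⟩
  · refine ⟨Ideal.subset_span (by simp), ?_⟩
    have hα : u * (α * α) + u * c * (a * b) + v * (α * b) = α := by
      linear_combination α * huv - u * hc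
    refine (congrArg (· ∈ Ideal.span _) hα).mp (add_mem (add_mem ?_ ?_) ?_) <;>
      exact Ideal.mul_mem_left _ _ (Ideal.subset_span (by simp))

theorem span_pair_mul_span_pair_eq_span_singleton (hcop : IsCoprime a b) (h : α ∣ a * b) :
    Ideal.span {a, α} * Ideal.span {b, α} = Ideal.span {α} := by
  obtain ⟨u, v, huv⟩ := hcop
  obtain ⟨c, hc⟩ := h
  rw [Ideal.span_pair_mul_span_pair]
  refine le_antisymm ?_ ?_ <;>
    simp only [Ideal.span_le, Set.insert_subset_iff, Set.singleton_subset_iff, SetLike.mem_coe]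
  · simp only [Ideal.mem_span_singleton]
    exact ⟨⟨c, hc⟩, ⟨a, by ring⟩, ⟨b, by ring⟩, ⟨α, rfl⟩⟩
  · have hα : u * (a * α) + v * (α * b) = α := by linear_combination α * huv
    refine (congrArg (· ∈ Ideal.span _) hα).mp (add_mem ?_ ?_) <;>
      exact Ideal.mul_mem_left _ _ (Ideal.subset_span (by simp))

theorem span_pair_mul_span_pair_of_mul_eq {c : R} (hcop : IsCoprime a c) (h : α * β = a * c) :
    Ideal.span {a, α} * Ideal.span {a, β} = Ideal.span {a} := by
  obtain ⟨u, v, huv⟩ := hcop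
  rw [Ideal.span_pair_mul_span_pair]
  refine le_antisymm ?_ ?_ <;>
    simp only [Ideal.span_le, Set.insert_subset_iff, Set.singleton_subset_iff, SetLike.mem_coe]
  · simp only [Ideal.mem_span_singleton]
    exact ⟨⟨a, rfl⟩, ⟨β, rfl⟩, ⟨α, by ring⟩, ⟨c, h⟩⟩
  · have ha : u * (a * a) + v * (α * β) = a := by linear_combination a * huv + v * h
    refine (congrArg (· ∈ Ideal.span _) ha).mp (add_mem ?_ ?_) <;>
      exact Ideal.mul_mem_left _ _ (Ideal.subset_span (by simp))

theorem span_pair_pow_eq_span_pow_pair {n : ℕ} (hcop : IsCoprime (α + β) b) (hn : n ≠ 0)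
    (h : b ^ n ∣ α * β) : Ideal.span {b, α} ^ n = Ideal.span {b ^ n, α} := by
  induction n, Nat.one_le_iff_ne_zero.mpr hn using Nat.le_induction with
  | base => simp
  | succ n hn' ih =>
    rw [pow_succ, ih (Nat.ne_zero_of_lt hn') ((pow_dvd_pow b n.le_succ).trans h), pow_succ]
    exact span_pair_mul_span_pair_eq_span_pair_mul hcop (pow_succ b n ▸ h)

end SpanPair

section AddSqrt

variable {R : Type*} [CommRing R] {q t x : R} {n : ℕ}

theorem span_two_add_sqrt_sq {c : R} (hcop : IsCoprime 2 c) (hx : x * x = t ^ 2 - 2 * c) :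
    Ideal.span {2, t + x} ^ 2 = Ideal.span {2} := by
  have h : Ideal.span {2, t - x} = Ideal.span {2, t + x} := by
    rw [show t - x = -(t + x) + 2 * t by ring, Ideal.span_pair_add_left_mul, Ideal.span_pair_neg]
  rw [sq]
  nth_rw 2 [← h]
  exact span_pair_mul_span_pair_of_mul_eq hcop (by linear_combination -hx)

theorem span_add_sqrt_pow (hcop : IsCoprime (2 * t) q) (hx : x * x = t ^ 2 - 2 * q ^ n) {j : ℕ}
    (hj : j ≠ 0) (hjn : j ≤ n) : Ideal.span {q, t + x} ^ j = Ideal.span {q ^ j, t + x} := by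
  refine span_pair_pow_eq_span_pow_pair (β := t - x) (by convert hcop using 1; ring) hj ?_
  exact (pow_dvd_pow q hjn).trans ⟨2, by linear_combination -hx⟩

theorem span_add_sqrt_pow_mul_span_two (hcop : IsCoprime (2 * t) q)
    (hx : x * x = t ^ 2 - 2 * q ^ n) (hn : n ≠ 0) :
    Ideal.span {q, t + x} ^ n * Ideal.span {2, t + x} = Ideal.span {t + x} := by
  rw [span_add_sqrt_pow hcop hx hn le_rfl]
  exact span_pair_mul_span_pair_eq_span_singleton hcop.of_mul_left_left.symm.pow_left
    ⟨t - x, by linear_combination hx⟩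

end AddSqrt

theorem orderOf_eq_two_mul {G : Type*} [Monoid G] {g : G} {n : ℕ} (hn : n ≠ 0)
    (h : g ^ (2 * n) = 1) (hne : ∀ j, 0 < j → j ≤ n → g ^ j ≠ 1) : orderOf g = 2 * n := by
  obtain ⟨c, hc⟩ := orderOf_dvd_of_pow_eq_one h
  have hpos : 0 < orderOf g := Nat.pos_of_ne_zero fun h0 ↦ by simp [h0, hn] at hc
  have hlt : n < orderOf g := not_le.mp fun hle ↦ hne _ hpos hle (pow_orderOf_eq_one g)
  obtain rfl : c = 1 := by
    rcases c with _ | _ | c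
    · omega
    · rfl
    · nlinarith
  omega

section ClassGroup

open nonZeroDivisors

variable {R : Type*} [CommRing R] [IsDedekindDomain R]

theorem orderOf_mk0_eq_two_mul {I J : (Ideal R)⁰} {n : ℕ} (hn : n ≠ 0)
    (hIJ : (I ^ n * J : Ideal R).IsPrincipal) (hJ2 : (J ^ 2 : Ideal R).IsPrincipal)
    (hJ : ¬(J : Ideal R).IsPrincipal)
    (hI : ∀ j, 0 < j → j < n → ¬(I ^ j : Ideal R).IsPrincipal) :
    orderOf (ClassGroup.mk0 I) = 2 * n := by
  have hIJ' : ClassGroup.mk0 I ^ n * ClassGroup.mk0 J = 1 := by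
    rw [← map_pow, ← map_mul, ClassGroup.mk0_eq_one_iff]
    exact hIJ
  have hJ2' : ClassGroup.mk0 J ^ 2 = 1 := by
    rw [← map_pow, ClassGroup.mk0_eq_one_iff]
    exact hJ2
  refine orderOf_eq_two_mul hn ?_ fun j hj hjn h ↦ ?_
  · rw [← one_pow 2, ← hIJ', mul_pow, hJ2', mul_one, ← pow_mul, mul_comm]
  · obtain rfl | hlt := hjn.eq_or_lt
    · rw [h, one_mul] at hIJ'
      exact hJ ((ClassGroup.mk0_eq_one_iff J.2).mp hIJ')
    · rw [← map_pow] at h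
      exact hI j hj hlt ((ClassGroup.mk0_eq_one_iff (I ^ j).2).mp h)

end ClassGroup

section ClassGroupOrder

variable {K : Type*} [Field K] [NumberField K] {x : 𝓞 K} {t : ℤ} {q n : ℕ}

theorem absNorm_eq_of_sq_eq_span_natCast (h2 : Module.finrank ℚ K = 2) {I : Ideal (𝓞 K)}
    (hI : I ^ 2 = Ideal.span {(n : 𝓞 K)}) : Ideal.absNorm I = n := by
  refine Nat.pow_left_injective two_ne_zero (Nat.cast_injective (R := ℤ) ?_)
  simp only [← map_pow, hI, Nat.cast_pow]
  exact_mod_cast absNorm_span_intCast h2 n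

theorem absNorm_span_two_add_sqrt (hcop : IsCoprime (2 * t) q)
    (hx : x * x = (t ^ 2 - 2 * q ^ n : ℤ)) (h2 : Module.finrank ℚ K = 2) :
    Ideal.absNorm (Ideal.span {2, t + x}) = 2 := by
  refine absNorm_eq_of_sq_eq_span_natCast h2 ?_
  exact span_two_add_sqrt_sq (c := (q : 𝓞 K) ^ n)
    (mod_cast (hcop.of_mul_left_left.pow_right (n := n)).intCast) (by push_cast at hx; exact hx)

theorem absNorm_span_add_sqrt (hd : ¬IsSquare (t ^ 2 - 2 * q ^ n : ℤ))
    (hcop : IsCoprime (2 * t) q) (hx : x * x = (t ^ 2 - 2 * q ^ n : ℤ))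
    (h2 : Module.finrank ℚ K = 2) (hn : n ≠ 0) :
    Ideal.absNorm (Ideal.span {(q : 𝓞 K), t + x}) = q := by
  have hnorm : Algebra.norm ℤ (t + x : 𝓞 K) = 2 * q ^ n := by
    have := norm_intCast_add_intCast_mul hd hx h2 t 1
    rw [Int.cast_one, one_mul] at this
    linarith
  have h := congrArg Ideal.absNorm
    (span_add_sqrt_pow_mul_span_two (t := (t : 𝓞 K)) (x := x) (q := (q : 𝓞 K)) (n := n)
      (mod_cast hcop.intCast) (mod_cast hx) hn)
  rw [map_mul, map_pow, absNorm_span_two_add_sqrt hcop hx h2, Ideal.absNorm_span_singleton, hnorm]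
    at h
  refine Nat.pow_left_injective hn (Nat.eq_of_mul_eq_mul_right two_pos (h.trans ?_))
  simp [Int.natAbs_mul, Int.natAbs_pow, mul_comm]

theorem not_isPrincipal_span_two_add_sqrt (hd : t ^ 2 - 2 * q ^ n < (-8 : ℤ))
    (hsq : Squarefree (t ^ 2 - 2 * q ^ n : ℤ)) (hcop : IsCoprime (2 * t) q)
    (hx : x * x = (t ^ 2 - 2 * q ^ n : ℤ)) (h2 : Module.finrank ℚ K = 2) :
    ¬(Ideal.span {2, t + x}).IsPrincipal := by
  intro hI
  have hnorm := absNorm_span_two_add_sqrt hcop hx h2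
  obtain ⟨a, -, ha⟩ := exists_eq_span_intCast_of_isPrincipal (by linarith) hsq hx h2 hI
    (by rw [hnorm]; push_cast; linarith)
  rw [hnorm] at ha
  exact Int.prime_two.not_isSquare ⟨a, by rw [← sq, ha]; rfl⟩

theorem not_isPrincipal_span_add_sqrt_pow (hq : q.Prime) {j : ℕ} (hj : j ≠ 0) (hjn : j ≤ n)
    (hd : t ^ 2 - 2 * q ^ n < (-(4 * q ^ j) : ℤ))
    (hsq : Squarefree (t ^ 2 - 2 * q ^ n : ℤ)) (hcop : IsCoprime (2 * t) q)
    (hx : x * x = (t ^ 2 - 2 * q ^ n : ℤ)) (h2 : Module.finrank ℚ K = 2) :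
    ¬(Ideal.span {(q : 𝓞 K), t + x} ^ j).IsPrincipal := by
  intro hI
  have hqj : (0 : ℤ) < q ^ j := mod_cast pow_pos hq.pos j
  have hd0 : (t ^ 2 - 2 * q ^ n : ℤ) < 0 := by linarith
  have hd' : ¬IsSquare (t ^ 2 - 2 * q ^ n : ℤ) := not_isSquare_of_neg hd0
  have hnorm : Ideal.absNorm (Ideal.span {(q : 𝓞 K), t + x} ^ j) = q ^ j := by
    rw [map_pow, absNorm_span_add_sqrt hd' hcop hx h2 (by omega)]
  obtain ⟨a, hIa, ha⟩ := exists_eq_span_intCast_of_isPrincipal hd0 hsq hx h2 hI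
    (by rw [hnorm]; push_cast; linarith)
  have hqZ : Prime (q : ℤ) := Nat.prime_iff_prime_int.mp hq
  have hqa : (q : ℤ) ∣ a := by
    refine hqZ.dvd_of_dvd_pow (n := 2) ?_
    rw [ha, hnorm, Nat.cast_pow]
    exact dvd_pow_self _ hj
  have hdvd : (a : 𝓞 K) ∣ t + x := by
    rw [← Ideal.mem_span_singleton, ← hIa,
      span_add_sqrt_pow (n := n) (mod_cast hcop.intCast) (mod_cast hx) hj hjn]
    exact Ideal.subset_span (by simp)
  obtain ⟨z, hz⟩ := (Int.cast_dvd_cast _ _ hqa).trans hdvd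
  have htr : 2 * t = q * Algebra.trace ℤ (𝓞 K) z := by
    rw [← trace_intCast_add_intCast_mul hd' hx h2 t 1, Int.cast_one, one_mul, hz, ← zsmul_eq_mul,
      map_zsmul, smul_eq_mul]
  exact hqZ.not_isUnit (hcop.symm.isUnit_of_dvd ⟨_, htr⟩)

theorem isCoprime_two_mul_of_squarefree (hq : q.Prime) (hq2 : q ≠ 2) (hn : 2 ≤ n)
    (hsq : Squarefree (t ^ 2 - 2 * q ^ n : ℤ)) : IsCoprime (2 * t) q := by
  have hqZ : Prime (q : ℤ) := Nat.prime_iff_prime_int.mp hq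
  refine .mul_left ?_ (hqZ.coprime_iff_not_dvd.mpr fun h ↦ ?_).symm
  · exact Nat.isCoprime_iff_coprime.mpr ((Nat.coprime_primes Nat.prime_two hq).mpr hq2.symm)
  · refine hqZ.not_isUnit (hsq q (dvd_sub ?_ ?_))
    · exact sq t ▸ mul_dvd_mul h h
    · exact sq (q : ℤ) ▸ (pow_dvd_pow _ hn).mul_left 2

theorem exists_orderOf_eq_two_mul (hq : q.Prime) (hq5 : 5 ≤ q) (hn : 2 ≤ n)
    (ht : t ^ 2 ≤ (q : ℤ) ^ n) (hsq : Squarefree (t ^ 2 - 2 * q ^ n : ℤ))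
    (hx : x * x = (t ^ 2 - 2 * q ^ n : ℤ)) (h2 : Module.finrank ℚ K = 2) :
    ∃ g : ClassGroup (𝓞 K), orderOf g = 2 * n := by
  have hcop := isCoprime_two_mul_of_squarefree hq (by omega) hn hsq
  have hlt {j : ℕ} (hj : j < n) : (4 * q ^ j : ℤ) < q ^ n := by
    have : 5 * q ^ j ≤ q ^ n := calc
      5 * q ^ j ≤ q ^ (j + 1) := by rw [pow_succ']; gcongr
      _ ≤ q ^ n := Nat.pow_le_pow_right hq.pos hj
    have hpos := pow_pos hq.pos j
    zify at this hpos
    linarith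
  have hd8 : t ^ 2 - 2 * q ^ n < (-8 : ℤ) := by
    have := hlt (show 1 < n by omega)
    rw [pow_one] at this
    have : (5 : ℤ) ≤ q := mod_cast hq5
    linarith
  have hd' : ¬IsSquare (t ^ 2 - 2 * q ^ n : ℤ) := not_isSquare_of_neg (by linarith)
  have mem_nonZeroDivisors {I : Ideal (𝓞 K)} (hI : Ideal.absNorm I ≠ 0) :
      I ∈ nonZeroDivisors (Ideal (𝓞 K)) :=
    mem_nonZeroDivisors_of_ne_zero fun h ↦ hI (Ideal.absNorm_eq_zero_iff.mpr h)
  have h𝔮 := mem_nonZeroDivisors (absNorm_span_add_sqrt hd' hcop hx h2 (by omega) ▸ hq.ne_zero)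
  have h𝔭 := mem_nonZeroDivisors (absNorm_span_two_add_sqrt hcop hx h2 ▸ two_ne_zero)
  refine ⟨ClassGroup.mk0 ⟨_, h𝔮⟩, orderOf_mk0_eq_two_mul (J := ⟨_, h𝔭⟩) (by omega)
    ⟨t + x, ?_⟩ ⟨2, ?_⟩ ?_ fun j hj hjn ↦ ?_⟩
  · exact span_add_sqrt_pow_mul_span_two (mod_cast hcop.intCast) (mod_cast hx) (by omega)
  · exact span_two_add_sqrt_sq (c := (q : 𝓞 K) ^ n)
      (mod_cast (hcop.of_mul_left_left.pow_right (n := n)).intCast) (mod_cast hx)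
  · exact not_isPrincipal_span_two_add_sqrt hd8 hsq hcop hx h2
  · exact not_isPrincipal_span_add_sqrt_pow hq hj.ne' hjn.le (by linarith [hlt hjn]) hsq hcop hx h2

end ClassGroupOrder

theorem exists_quadratic_field_of_neg {d : ℤ} (hd : d < 0) :
    ∃ (K : Type) (_ : Field K) (_ : NumberField K),
      (∃ x : K, x * x = d) ∧ Module.finrank ℚ K = 2 := by
  have : Fact (∀ r : ℚ, r ^ 2 ≠ (d : ℚ) + 0 * r) := ⟨fun r h ↦ by
    have : (d : ℚ) < 0 := mod_cast hd
    nlinarith [sq_nonneg r]⟩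
  refine ⟨QuadraticAlgebra ℚ (d : ℚ) 0, inferInstance,
    @NumberField.mk _ _ inferInstance ?_, ⟨⟨0, 1⟩, ?_⟩, ?_⟩
  · convert (inferInstance : Module.Finite ℚ (QuadraticAlgebra ℚ (d : ℚ) 0))
  · ext <;> simp
  · convert QuadraticAlgebra.finrank_eq_two (d : ℚ) 0

theorem exists_ringOfIntegers_mul_self_eq {K : Type*} [Field K] [NumberField K] {d : ℤ}
    (h : ∃ x : K, x * x = d) : ∃ x : 𝓞 K, x * x = d := by
  obtain ⟨x, hx⟩ := h
  have hint : IsIntegral ℤ x := by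
    refine .of_pow two_pos ?_
    rw [sq, hx]
    exact isIntegral_algebraMap (x := d)
  exact ⟨⟨x, hint⟩, RingOfIntegers.ext (hx.trans (map_intCast (algebraMap (𝓞 K) K) d).symm)⟩

theorem finite_setOf_goodOrderM (m : ℕ) (X : ℝ) : {d : ℤ | GoodOrderM m X d}.Finite := by
  refine (Set.finite_Icc (-⌈4 * X⌉) 0).subset fun d ⟨hd, hsq, h⟩ ↦ ⟨?_, hd.le⟩
  obtain ⟨K, _, _, hxK, h2⟩ := exists_quadratic_field_of_neg hd
  obtain ⟨x, hx⟩ := exists_ringOfIntegers_mul_self_eq hxK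
  have hdvd := dvd_four_mul_discr (not_isSquare_of_neg hd) hsq hx h2
  have hle : -d ≤ 4 * |discr K| := by
    have hpos : 0 < |4 * discr K| := abs_pos.mpr (mul_ne_zero four_ne_zero (discr_ne_zero K))
    simpa [abs_mul] using Int.le_of_dvd hpos ((dvd_abs _ _).mpr hdvd).neg_left
  have hX : ((-d : ℤ) : ℝ) ≤ 4 * X := by
    have : ((-d : ℤ) : ℝ) ≤ 4 * |(discr K : ℝ)| := mod_cast hle
    linarith [(h K hxK h2).1]
  linarith [Int.cast_le.mp (hX.trans (Int.le_ceil _))]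

section Radicands

open Finset

open Classical in
/-- The squarefree integers of the form `t ^ 2 - 2 * u ^ 2` with `0 < t ≤ u`. For `u = q ^ k` with
`q` prime, these are the radicands of the imaginary quadratic fields in which an ideal of norm `q`
has a class of order `4 * k`. -/
noncomputable def radicands (u : ℤ) : Finset ℤ :=
  {d ∈ (Ioc 0 u).image fun t ↦ t ^ 2 - 2 * u ^ 2 | Squarefree d}

variable {u d : ℤ}

theorem mem_radicands :
    d ∈ radicands u ↔ (∃ t, (0 < t ∧ t ≤ u) ∧ t ^ 2 - 2 * u ^ 2 = d) ∧ Squarefree d := by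
  simp [radicands]

theorem neg_mem_Ico_of_mem_radicands (h : d ∈ radicands u) : -d ∈ Set.Ico (u ^ 2) (2 * u ^ 2) := by
  obtain ⟨⟨t, ⟨ht0, htu⟩, rfl⟩, -⟩ := mem_radicands.mp h
  constructor <;> nlinarith

theorem goodOrderM_of_mem_radicands {q k : ℕ} {X : ℝ} (hq : q.Prime) (hq5 : 5 ≤ q) (hk : k ≠ 0)
    (hX : 8 * (q : ℝ) ^ (2 * k) ≤ X) (hd : d ∈ radicands (q ^ k)) : GoodOrderM (4 * k) X d := by
  obtain ⟨hle, hlt⟩ := neg_mem_Ico_of_mem_radicands hd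
  obtain ⟨⟨t, ⟨ht0, htu⟩, rfl⟩, hsq⟩ := mem_radicands.mp hd
  have hu : ((q : ℤ) ^ k) ^ 2 = q ^ (2 * k) := by rw [← pow_mul, mul_comm]
  have hneg : t ^ 2 - 2 * ((q : ℤ) ^ k) ^ 2 < 0 := by nlinarith
  have ht : t ^ 2 ≤ (q : ℤ) ^ (2 * k) := hu ▸ pow_le_pow_left₀ ht0.le htu 2
  refine ⟨hneg, hsq, fun K _ _ hxK h2 ↦ ?_⟩
  obtain ⟨x, hx⟩ := exists_ringOfIntegers_mul_self_eq hxK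
  constructor
  · have hdvd := discr_dvd_four_mul (not_isSquare_of_neg hneg) hx h2
    have habs := Int.le_of_dvd (by linarith) ((abs_dvd _ _).mpr hdvd).neg_right
    rw [hu] at habs
    have : (|discr K| : ℝ) ≤ 8 * (q : ℝ) ^ (2 * k) := by
      exact_mod_cast (show |discr K| ≤ 8 * (q : ℤ) ^ (2 * k) by nlinarith)
    exact this.trans hX
  · rw [hu] at hsq hx
    obtain ⟨g, hg⟩ := exists_orderOf_eq_two_mul hq hq5 (by omega) ht hsq hx h2
    exact ⟨g, by rw [hg]; ring⟩

end Radicands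

section Sieve

open Finset

theorem card_filter_modEq_le {a b r : ℤ} (hab : a ≤ b) (hr : 0 < r) (v : ℤ) :
    (#{t ∈ Ioc a b | t ≡ v [ZMOD r]} : ℝ) ≤ (b - a) / r + 1 := by
  have hQ : (#{t ∈ Ioc a b | t ≡ v [ZMOD r]} : ℚ) ≤ (b - a) / r + 1 := by
    have hnonneg : (0 : ℚ) ≤ (b - a) / r :=
      div_nonneg (mod_cast sub_nonneg.mpr hab) (mod_cast hr.le)
    rw [← Int.cast_natCast, Int.Ioc_filter_modEq_card a b hr v, Int.cast_max, Int.cast_zero,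
      Int.cast_sub]
    refine max_le ?_ (by linarith)
    have hsplit : ((b : ℚ) - a) / r = (b - v) / r - (a - v) / r := by ring
    linarith [Int.floor_le (((b : ℚ) - v) / r), Int.lt_floor_add_one (((a : ℚ) - v) / r)]
  exact_mod_cast (Rat.cast_le (K := ℝ)).mpr hQ

theorem modEq_or_modEq_neg_of_sq_dvd_sq_sub {p : ℕ} (hp : p.Prime) (hp2 : p ≠ 2) {c s t : ℤ}
    (hc : ¬(p : ℤ) ∣ c) (hs : (p : ℤ) ^ 2 ∣ s ^ 2 - c) (ht : (p : ℤ) ^ 2 ∣ t ^ 2 - c) :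
    t ≡ s [ZMOD p ^ 2] ∨ t ≡ -s [ZMOD p ^ 2] := by
  have hpZ : Prime (p : ℤ) := Nat.prime_iff_prime_int.mp hp
  have hps : ¬(p : ℤ) ∣ s := fun h ↦
    hc ((dvd_sub_right (dvd_pow h two_ne_zero)).mp ((dvd_pow_self _ two_ne_zero).trans hs))
  have hp2s : ¬(p : ℤ) ∣ 2 * s := by
    rw [hpZ.dvd_mul, not_or]
    refine ⟨fun h ↦ hp2 ?_, hps⟩
    exact (Nat.prime_dvd_prime_iff_eq hp Nat.prime_two).mp (mod_cast h)
  have hdvd : (p : ℤ) ^ 2 ∣ (t - s) * (t + s) := by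
    rw [show (t - s) * (t + s) = t ^ 2 - c - (s ^ 2 - c) by ring]
    exact dvd_sub ht hs
  rw [Int.modEq_comm, Int.modEq_iff_dvd, Int.modEq_comm, Int.modEq_iff_dvd, sub_neg_eq_add]
  by_cases h : (p : ℤ) ∣ t - s
  · refine .inl (hpZ.pow_dvd_of_dvd_mul_right 2 (fun h' ↦ hp2s ?_) hdvd)
    rw [show 2 * s = t + s - (t - s) by ring]
    exact dvd_sub h' h
  · exact .inr (hpZ.pow_dvd_of_dvd_mul_left 2 h hdvd)

theorem card_filter_sq_dvd_sq_sub_le {p : ℕ} (hp : p.Prime) (hp2 : p ≠ 2) {a b c : ℤ}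
    (hab : a ≤ b) (hc : ¬(p : ℤ) ∣ c) :
    (#{t ∈ Ioc a b | (p : ℤ) ^ 2 ∣ t ^ 2 - c} : ℝ) ≤ 2 * ((b - a) / p ^ 2 + 1) := by
  set S := {t ∈ Ioc a b | (p : ℤ) ^ 2 ∣ t ^ 2 - c} with hS
  have hab' : (0 : ℝ) ≤ b - a := sub_nonneg.mpr (mod_cast hab)
  obtain h | ⟨s, hs⟩ := S.eq_empty_or_nonempty
  · rw [h, card_empty, Nat.cast_zero]
    positivity
  have hsub : S ⊆ {t ∈ Ioc a b | t ≡ s [ZMOD p ^ 2]} ∪ {t ∈ Ioc a b | t ≡ -s [ZMOD p ^ 2]} := by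
    intro t ht
    rw [hS, mem_filter] at hs ht
    rw [← filter_or, mem_filter]
    exact ⟨ht.1, modEq_or_modEq_neg_of_sq_dvd_sq_sub hp hp2 hc hs.2 ht.2⟩
  have hr : 0 < (p : ℤ) ^ 2 := mod_cast pow_pos hp.pos 2
  have hcard : (#S : ℝ) ≤ #{t ∈ Ioc a b | t ≡ s [ZMOD p ^ 2]}
      + #{t ∈ Ioc a b | t ≡ -s [ZMOD p ^ 2]} :=
    mod_cast (card_le_card hsub).trans (card_union_le _ _)
  have h₁ := card_filter_modEq_le hab hr s
  have h₂ := card_filter_modEq_le hab hr (-s)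
  push_cast at h₁ h₂
  linarith

theorem sum_Ioc_two_inv_sq_le (n : ℕ) : ∑ i ∈ Ioc 2 n, ((i : ℝ) ^ 2)⁻¹ ≤ 4 / 9 := by
  obtain hn | hn := le_or_gt n 3
  · interval_cases n <;> norm_num [sum_Ioc_succ_top]
  · rw [← sum_Ioc_consecutive _ (show 2 ≤ 3 by norm_num) hn.le]
    have h := sum_Ioc_inv_sq_le_sub (α := ℝ) three_ne_zero hn.le
    have : (0 : ℝ) ≤ (n : ℝ)⁻¹ := by positivity
    norm_num [sum_Ioc_succ_top] at h ⊢
    linarith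

theorem exists_prime_sq_dvd_of_not_squarefree {n : ℤ} (hn : ¬Squarefree n) :
    ∃ p : ℕ, p.Prime ∧ (p : ℤ) ^ 2 ∣ n := by
  rw [← Int.squarefree_natAbs, Nat.squarefree_iff_prime_squarefree] at hn
  push Not at hn
  obtain ⟨p, hp, hdvd⟩ := hn
  exact ⟨p, hp, Int.natCast_pow p 2 ▸ Int.natCast_dvd.mpr (sq p ▸ hdvd)⟩

theorem not_four_dvd_sq_sub_two_mul_sq {t u : ℤ} (hu : Odd u) : ¬4 ∣ t ^ 2 - 2 * u ^ 2 := by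
  obtain ⟨w, rfl⟩ := hu
  obtain ⟨s, rfl | rfl⟩ := Int.even_or_odd' t <;> ring_nf <;> omega

theorem exists_odd_prime_sq_dvd {t u : ℤ} (hu : Odd u) (ht : t ∈ Ioc 0 u)
    (hsq : ¬Squarefree (t ^ 2 - 2 * u ^ 2)) :
    ∃ p : ℕ, p.Prime ∧ p ≠ 2 ∧ p ≤ 2 * u ∧ (p : ℤ) ^ 2 ∣ t ^ 2 - 2 * u ^ 2 := by
  obtain ⟨p, hp, hdvd⟩ := exists_prime_sq_dvd_of_not_squarefree hsq
  obtain ⟨ht0, htu⟩ := mem_Ioc.mp ht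
  refine ⟨p, hp, ?_, ?_, hdvd⟩
  · rintro rfl
    exact not_four_dvd_sq_sub_two_mul_sq hu (by simpa using hdvd)
  · have := Int.le_of_dvd (by nlinarith) (dvd_neg.mpr hdvd)
    nlinarith

open Classical in
theorem card_radicands_add (u : ℤ) :
    #(radicands u) + #{t ∈ Ioc 0 u | ¬Squarefree (t ^ 2 - 2 * u ^ 2)} = u.toNat := by
  rw [radicands, filter_image, card_image_of_injOn]
  · simpa using card_filter_add_card_filter_not (s := Ioc 0 u) (Squarefree <| · ^ 2 - 2 * u ^ 2)
  · intro s hs t ht hst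
    simp only [coe_filter, mem_Ioc, Set.mem_ofPred_eq] at hs ht
    exact (sq_eq_sq₀ hs.1.1.le ht.1.1.le).mp (sub_left_inj.mp hst)

variable {q k : ℕ}

open Classical in
theorem filter_not_squarefree_subset (hq : q.Prime) (hq2 : q ≠ 2) (hk : k ≠ 0) :
    {t ∈ Ioc 0 ((q : ℤ) ^ k) | ¬Squarefree (t ^ 2 - 2 * ((q : ℤ) ^ k) ^ 2)} ⊆
      {t ∈ Ioc 0 ((q : ℤ) ^ k) | t ≡ 0 [ZMOD q]} ∪
        ((Nat.primesLE (2 * q ^ k)).filter fun p ↦ p ≠ 2 ∧ p ≠ q).biUnion fun p ↦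
          {t ∈ Ioc 0 ((q : ℤ) ^ k) | (p : ℤ) ^ 2 ∣ t ^ 2 - 2 * ((q : ℤ) ^ k) ^ 2} := by
  intro t ht
  rw [mem_filter] at ht
  have hodd : Odd ((q : ℤ) ^ k) := mod_cast (hq.odd_of_ne_two hq2).pow
  obtain ⟨p, hp, hp2, hpu, hdvd⟩ := exists_odd_prime_sq_dvd hodd ht.1 ht.2
  rw [mem_union, mem_filter, mem_biUnion]
  by_cases hpq : p = q
  · subst hpq
    refine .inl ⟨ht.1, Int.modEq_zero_iff_dvd.mpr ?_⟩
    have hpt : (p : ℤ) ∣ t ^ 2 := by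
      refine (dvd_sub_left (c := 2 * ((p : ℤ) ^ k) ^ 2) ?_).mp
        ((dvd_pow_self _ two_ne_zero).trans hdvd)
      exact ((dvd_pow_self _ hk).trans (dvd_pow_self _ two_ne_zero)).mul_left 2
    exact (Nat.prime_iff_prime_int.mp hp).dvd_of_dvd_pow hpt
  · refine .inr ⟨p, ?_, mem_filter.mpr ⟨ht.1, hdvd⟩⟩
    exact mem_filter.mpr ⟨Nat.mem_primesLE.mpr ⟨mod_cast hpu, hp⟩, hp2, hpq⟩

theorem sum_card_filter_sq_dvd_le (hq : q.Prime) :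
    ∑ p ∈ Nat.primesLE (2 * q ^ k) with p ≠ 2 ∧ p ≠ q,
      (#{t ∈ Ioc 0 ((q : ℤ) ^ k) | (p : ℤ) ^ 2 ∣ t ^ 2 - 2 * ((q : ℤ) ^ k) ^ 2} : ℝ) ≤
        8 / 9 * q ^ k + 2 * (2 * q ^ k).primeCounting := by
  set P := (Nat.primesLE (2 * q ^ k)).filter fun p ↦ p ≠ 2 ∧ p ≠ q
  have hP {p} (hp : p ∈ P) : (p ≤ 2 * q ^ k ∧ p.Prime) ∧ p ≠ 2 ∧ p ≠ q := by
    rwa [mem_filter, Nat.mem_primesLE] at hp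
  have hcard : (#P : ℝ) ≤ (2 * q ^ k).primeCounting := by
    rw [← Nat.primesLE_card_eq_primeCounting]
    exact_mod_cast card_filter_le _ _
  have hsum : ∑ p ∈ P, ((p : ℝ) ^ 2)⁻¹ ≤ 4 / 9 := by
    refine (sum_le_sum_of_subset_of_nonneg (fun p hp ↦ mem_Ioc.mpr ?_) ?_).trans
      (sum_Ioc_two_inv_sq_le (2 * q ^ k))
    · exact ⟨(hP hp).1.2.two_le.lt_of_ne' (hP hp).2.1, (hP hp).1.1⟩
    · exact fun _ _ _ ↦ by positivity
  calc
    _ ≤ ∑ p ∈ P, 2 * ((q : ℝ) ^ k * ((p : ℝ) ^ 2)⁻¹ + 1) := by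
      refine sum_le_sum fun p hp ↦ ?_
      obtain ⟨⟨-, hp'⟩, hp2, hpq⟩ := hP hp
      have hpZ := Nat.prime_iff_prime_int.mp hp'
      have hpc : ¬(p : ℤ) ∣ 2 * ((q : ℤ) ^ k) ^ 2 := by
        rw [hpZ.dvd_mul, not_or, ← pow_mul]
        refine ⟨fun h ↦ hp2 ?_, fun h ↦ hpq ?_⟩
        · exact (Nat.prime_dvd_prime_iff_eq hp' Nat.prime_two).mp (mod_cast h)
        · exact (Nat.prime_dvd_prime_iff_eq hp' hq).mp (mod_cast hpZ.dvd_of_dvd_pow h)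
      simpa [div_eq_mul_inv] using
        card_filter_sq_dvd_sq_sub_le hp' hp2 (a := 0) (b := (q : ℤ) ^ k) (by positivity) hpc
    _ = 2 * (q ^ k * ∑ p ∈ P, ((p : ℝ) ^ 2)⁻¹ + #P) := by
      rw [← mul_sum, sum_add_distrib, ← mul_sum, sum_const, nsmul_one]
    _ ≤ 2 * (q ^ k * (4 / 9) + (2 * q ^ k).primeCounting) := by gcongr
    _ = _ := by ring

theorem pow_div_twenty_le_card_radicands (hq : q.Prime) (hq80 : 80 ≤ q) (hk : k ≠ 0)
    (hpi : ((2 * q ^ k).primeCounting : ℝ) ≤ q ^ k / 160) :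
    (q : ℝ) ^ k / 20 ≤ #(radicands (q ^ k)) := by
  classical
  have hq80' : (80 : ℝ) ≤ q := mod_cast hq80
  have hqk : (q : ℝ) ≤ q ^ k := le_self_pow₀ (by linarith) hk
  have hmul : (#{t ∈ Ioc 0 ((q : ℤ) ^ k) | t ≡ 0 [ZMOD q]} : ℝ) ≤ q ^ k / 40 := by
    have h := card_filter_modEq_le (a := 0) (b := (q : ℤ) ^ k) (r := q) (by positivity)
      (mod_cast hq.pos) 0
    have hdiv : (q : ℝ) ^ k / q ≤ q ^ k / 80 := by gcongr
    push_cast [sub_zero] at h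
    linarith
  have hbad : (#{t ∈ Ioc 0 ((q : ℤ) ^ k) | ¬Squarefree (t ^ 2 - 2 * ((q : ℤ) ^ k) ^ 2)} : ℝ) ≤
      q ^ k / 40 + (8 / 9 * q ^ k + 2 * (2 * q ^ k).primeCounting) := by
    refine le_trans ?_ (add_le_add hmul (sum_card_filter_sq_dvd_le hq))
    exact_mod_cast (card_le_card (filter_not_squarefree_subset hq (by omega) hk)).trans <|
      (card_union_le _ _).trans (add_le_add_right card_biUnion_le _)
  have htot : (#(radicands (q ^ k)) : ℝ)
      + #{t ∈ Ioc 0 ((q : ℤ) ^ k) | ¬Squarefree (t ^ 2 - 2 * ((q : ℤ) ^ k) ^ 2)} = q ^ k := by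
    exact_mod_cast card_radicands_add ((q : ℤ) ^ k)
  linarith

end Sieve

section DivisorBound

open Finset

theorem add_one_le_mul_pow_rpow {p η : ℝ} (hp : 2 ≤ p) (hη : 0 < η) (e : ℕ) :
    (e : ℝ) + 1 ≤ (1 + 1 / (η * Real.log 2)) * (p ^ e) ^ η := by
  have := Real.log_pos one_lt_two
  have hexp : 1 + e * (η * Real.log 2) ≤ (p ^ e) ^ η := by
    have hpow : ((2 : ℝ) ^ e) ^ η = Real.exp (e * (η * Real.log 2)) := by
      rw [Real.rpow_def_of_pos (by positivity), Real.log_pow]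
      ring_nf
    calc
      1 + e * (η * Real.log 2) ≤ (2 ^ e) ^ η := by
        rw [hpow, add_comm]
        exact Real.add_one_le_exp _
      _ ≤ (p ^ e) ^ η := by gcongr
  calc
    (e : ℝ) + 1 ≤ e + 1 + (1 / (η * Real.log 2) + e * (η * Real.log 2)) :=
      le_add_of_nonneg_right (by positivity)
    _ = (1 + 1 / (η * Real.log 2)) * (1 + e * (η * Real.log 2)) := by
      field_simp
      ring
    _ ≤ _ := by gcongr

theorem add_one_le_pow_rpow {p η : ℝ} (hη : 0 < η) (hp : 2 ^ (1 / η) ≤ p) (e : ℕ) :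
    (e : ℝ) + 1 ≤ (p ^ e) ^ η := by
  have hp0 : 0 ≤ p := le_trans (by positivity) hp
  have hpη : 2 ≤ p ^ η := by
    have h := Real.rpow_le_rpow (by positivity) hp hη.le
    rwa [← Real.rpow_mul zero_le_two, one_div_mul_cancel hη.ne', Real.rpow_one] at h
  calc
    (e : ℝ) + 1 ≤ 2 ^ e := mod_cast Nat.lt_two_pow_self
    _ ≤ (p ^ η) ^ e := by gcongr
    _ = (p ^ e) ^ η := Real.rpow_pow_comm hp0 η e

theorem prod_primeFactors_pow_rpow {n : ℕ} (hn : n ≠ 0) (η : ℝ) :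
    ∏ p ∈ n.primeFactors, ((p : ℝ) ^ n.factorization p) ^ η = (n : ℝ) ^ η := by
  rw [Real.finsetProd_rpow _ _ fun _ _ ↦ by positivity]
  conv_rhs => rw [← Nat.prod_factorization_pow_eq_self hn]
  simp [Finsupp.prod]

theorem exists_card_divisors_le {η : ℝ} (hη : 0 < η) :
    ∃ C : ℝ, 0 ≤ C ∧ ∀ n : ℕ, (#n.divisors : ℝ) ≤ C * (n : ℝ) ^ η := by
  set c : ℝ := 1 + 1 / (η * Real.log 2)
  have hc : 1 ≤ c := by
    have := Real.log_pos one_lt_two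
    exact le_add_of_nonneg_right (by positivity)
  obtain ⟨P, hP⟩ := exists_nat_ge ((2 : ℝ) ^ (1 / η))
  refine ⟨c ^ P, by positivity, fun n ↦ ?_⟩
  obtain rfl | hn := eq_or_ne n 0
  · rw [Nat.divisors_zero, card_empty, Nat.cast_zero]
    positivity
  have hlocal (p) (hp : p ∈ n.primeFactors) : (n.factorization p : ℝ) + 1 ≤
      (if p < P then c else 1) * ((p : ℝ) ^ n.factorization p) ^ η := by
    split_ifs with hpP
    · exact add_one_le_mul_pow_rpow (mod_cast (Nat.prime_of_mem_primeFactors hp).two_le) hη _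
    · rw [one_mul]
      exact add_one_le_pow_rpow hη (hP.trans (mod_cast not_lt.mp hpP)) _
  have hsmall : #{p ∈ n.primeFactors | p < P} ≤ P := by
    refine (card_le_card fun p hp ↦ mem_range.mpr ?_).trans (card_range P).le
    exact (mem_filter.mp hp).2
  calc
    (#n.divisors : ℝ) = ∏ p ∈ n.primeFactors, ((n.factorization p : ℝ) + 1) := by
      rw [Nat.card_divisors hn]
      push_cast
      rfl
    _ ≤ ∏ p ∈ n.primeFactors, (if p < P then c else 1) * ((p : ℝ) ^ n.factorization p) ^ η :=
      prod_le_prod (fun _ _ ↦ by positivity) hlocal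
    _ = c ^ #{p ∈ n.primeFactors | p < P} * (n : ℝ) ^ η := by
      rw [prod_mul_distrib, prod_primeFactors_pow_rpow hn, prod_ite, prod_const, prod_const_one,
        mul_one]
    _ ≤ c ^ P * (n : ℝ) ^ η := by gcongr

end DivisorBound

section Counting

open Finset Filter

theorem card_mul_sub_le_card_biUnion {ι α : Type*} [DecidableEq α] {Q : Finset ι}
    {S : ι → Finset α} {B E : ℝ} (hE : 0 ≤ E) (hB : ∀ i ∈ Q, B ≤ #(S i))
    (hSE : (Q : Set ι).Pairwise fun i j ↦ (#(S i ∩ S j) : ℝ) ≤ E) :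
    #Q * (B - #Q * E) ≤ #(Q.biUnion S) := by
  classical
  induction Q using Finset.induction_on with
  | empty => simp
  | insert a Q ha ih =>
    rw [coe_insert, Set.pairwise_insert_of_notMem (mod_cast ha)] at hSE
    specialize ih (fun i hi ↦ hB i (mem_insert_of_mem hi)) hSE.1
    have hinter : (#(S a ∩ Q.biUnion S) : ℝ) ≤ #Q * E := by
      rw [inter_biUnion]
      calc
        (#(Q.biUnion fun i ↦ S a ∩ S i) : ℝ) ≤ ∑ i ∈ Q, (#(S a ∩ S i) : ℝ) :=
          mod_cast card_biUnion_le
        _ ≤ ∑ _ ∈ Q, E := sum_le_sum fun i hi ↦ (hSE.2 i hi).1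
        _ = #Q * E := by rw [sum_const, nsmul_eq_mul]
    have hunion : (#(S a ∪ Q.biUnion S) : ℝ) + #(S a ∩ Q.biUnion S) = #(S a) + #(Q.biUnion S) :=
      mod_cast card_union_add_card_inter _ _
    have ha' := hB a (mem_insert_self _ _)
    have : 0 ≤ #Q * E := by positivity
    rw [card_insert_of_notMem ha, biUnion_insert]
    push_cast
    linarith

-- A common element is determined by the divisor `t - s` of `2 * (u ^ 2 - v ^ 2)`.
theorem card_radicands_inter_le {u v : ℤ} (hv : 0 < v) (huv : v < u) :
    #(radicands u ∩ radicands v) ≤ #(2 * (u ^ 2 - v ^ 2)).toNat.divisors := by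
  have hpos : 0 < 2 * (u ^ 2 - v ^ 2) := by nlinarith
  set n := (2 * (u ^ 2 - v ^ 2)).toNat
  have hn : (n : ℤ) = 2 * (u ^ 2 - v ^ 2) := Int.toNat_of_nonneg hpos.le
  suffices h : radicands u ∩ radicands v ⊆
      n.divisors.image fun e : ℕ ↦ (((n : ℤ) / e + e) / 2) ^ 2 - 2 * u ^ 2 from
    (card_le_card h).trans card_image_le
  intro d hd
  rw [mem_inter, mem_radicands, mem_radicands] at hd
  obtain ⟨⟨⟨t, ⟨ht0, -⟩, rfl⟩, -⟩, ⟨s, ⟨hs0, -⟩, hst⟩, -⟩ := hd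
  have hmul : (t - s) * (t + s) = n := by linarith
  have hlt : 0 < t - s := pos_of_mul_pos_left (hmul ▸ hn ▸ hpos) (by linarith)
  lift t - s to ℕ using hlt.le with e he
  refine mem_image.mpr ⟨e, Nat.mem_divisors.mpr ⟨?_, by omega⟩, ?_⟩
  · exact_mod_cast (Dvd.intro _ hmul : (e : ℤ) ∣ n)
  · rw [← hmul, Int.mul_ediv_cancel_left _ hlt.ne', show (t + s + e) / 2 = t by omega]

theorem eventually_card_radicands_inter_le {k : ℕ} (hk : k ≠ 0) {c η : ℝ} (hc : 0 < c)
    (hη : 0 < η) : ∀ᶠ A : ℝ in atTop, ∀ p q : ℕ, 0 < p → p < q → q ≤ A →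
      (#(radicands (q ^ k) ∩ radicands (p ^ k)) : ℝ) ≤ c * A ^ η := by
  obtain ⟨C, hC0, hC⟩ := exists_card_divisors_le (η := η / (4 * k)) (by positivity)
  have hlarge := (tendsto_rpow_atTop (half_pos hη)).eventually_ge_atTop (C * 2 ^ (η / (4 * k)) / c)
  filter_upwards [hlarge, eventually_gt_atTop 0] with A hA hA0 p q hp hpq hqA
  have hpow : (p : ℤ) ^ k < q ^ k := mod_cast Nat.pow_lt_pow_left hpq hk
  have hcard := card_radicands_inter_le (u := q ^ k) (by positivity) hpow
  set n := (2 * (((q : ℤ) ^ k) ^ 2 - ((p : ℤ) ^ k) ^ 2)).toNat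
  have hn : (n : ℝ) ≤ 2 * A ^ (2 * k) := by
    have hsq : ((p : ℤ) ^ k) ^ 2 ≤ ((q : ℤ) ^ k) ^ 2 := by gcongr
    have hnZ : (n : ℤ) ≤ 2 * ((q : ℤ) ^ k) ^ 2 :=
      (Int.toNat_of_nonneg (by linarith)).trans_le (by linarith [sq_nonneg ((p : ℤ) ^ k)])
    calc
      (n : ℝ) ≤ 2 * ((q : ℝ) ^ k) ^ 2 := mod_cast hnZ
      _ = 2 * (q : ℝ) ^ (2 * k) := by rw [← pow_mul, mul_comm k]
      _ ≤ 2 * A ^ (2 * k) := by gcongr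
  calc
    (#(radicands (q ^ k) ∩ radicands (p ^ k)) : ℝ) ≤ #n.divisors := mod_cast hcard
    _ ≤ C * (2 * A ^ (2 * k)) ^ (η / (4 * k)) := (hC n).trans (by gcongr)
    _ = C * 2 ^ (η / (4 * k)) * A ^ (η / 2) := by
      rw [Real.mul_rpow zero_le_two (by positivity), ← Real.rpow_natCast, ← Real.rpow_mul hA0.le,
        mul_assoc]
      congr 3
      push_cast
      field_simp
      norm_num
    _ ≤ c * A ^ (η / 2) * A ^ (η / 2) := by
      rw [div_le_iff₀' hc] at hA
      gcongr
    _ = c * A ^ η := by rw [mul_assoc, ← Real.rpow_add hA0, add_halves]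

theorem eventually_two_mul_rpow_le_primeCounting {δ : ℝ} (hδ : 0 < δ) (hδ1 : δ ≤ 1) :
    ∀ᶠ A : ℝ in atTop, 2 * A ^ (1 - δ) ≤ (⌊A⌋₊.primeCounting : ℝ) := by
  have hlittle := (isLittleO_log_rpow_atTop hδ).bound (show (0 : ℝ) < 1 / 8 by norm_num)
  filter_upwards [hlittle, eventually_ge_atTop 8] with A hlog hA8
  have hA0 : 0 < A := by linarith
  have hlogpos : 0 < Real.log A := Real.log_pos (by linarith)
  rw [Real.norm_of_nonneg hlogpos.le, Real.norm_of_nonneg (by positivity)] at hlog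
  refine le_trans ?_ (Chebyshev.pi_ge' (by linarith))
  rw [le_div_iff₀ hlogpos]
  have hlogA : Real.log (A + 2) ≤ A / 4 := by
    have hle : Real.log (A + 2) ≤ Real.log (A ^ 2) := Real.log_le_log (by linarith) (by nlinarith)
    have hAδ : A ^ δ ≤ A ^ (1 : ℝ) := Real.rpow_le_rpow_of_exponent_le (by linarith) hδ1
    rw [Real.log_pow, Nat.cast_two] at hle
    rw [Real.rpow_one] at hAδ
    linarith
  have hmain : 2 * A ^ (1 - δ) * Real.log A ≤ A / 4 := by
    calc
      2 * A ^ (1 - δ) * Real.log A ≤ 2 * A ^ (1 - δ) * (1 / 8 * A ^ δ) := by gcongr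
      _ = A ^ (1 - δ) * A ^ δ / 4 := by ring
      _ = A / 4 := by rw [← Real.rpow_add hA0, sub_add_cancel, Real.rpow_one]
  nlinarith [Real.log_two_gt_d9]

theorem eventually_primeCounting_le_mul {c : ℝ} (hc : 0 < c) :
    ∀ᶠ n : ℕ in atTop, (n.primeCounting : ℝ) ≤ c * n := by
  have hlog := Real.tendsto_log_atTop.eventually_ge_atTop ((Real.log 4 + 1) / c)
  filter_upwards [tendsto_natCast_atTop_atTop.eventually <|
    (Chebyshev.eventually_primeCounting_le one_pos).and (hlog.and (eventually_gt_atTop 1))]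
    with n ⟨hle, hlog, hn⟩
  rw [Nat.floor_natCast] at hle
  refine hle.trans ((div_le_iff₀ (Real.log_pos hn)).mpr ?_)
  rw [div_le_iff₀' hc] at hlog
  calc
    (Real.log 4 + 1) * n ≤ c * Real.log n * n := by gcongr
    _ = c * n * Real.log n := by ring

theorem eventually_rpow_div_twenty_le_card_radicands {k : ℕ} (hk : k ≠ 0) {a : ℝ} (ha : 0 < a) :
    ∀ᶠ A : ℝ in atTop, ∀ q : ℕ, q.Prime → A ^ a ≤ q → A ^ (a * k) / 20 ≤ #(radicands (q ^ k)) := by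
  obtain ⟨N, hN⟩ := eventually_atTop.mp
    (eventually_primeCounting_le_mul (show (0 : ℝ) < 1 / 320 by norm_num))
  filter_upwards [(tendsto_rpow_atTop ha).eventually_ge_atTop (max 80 (N : ℝ)),
    eventually_ge_atTop 0] with A hA hA0 q hq hAq
  have hq80 : (80 : ℝ) ≤ q := (le_max_left _ _).trans (hA.trans hAq)
  have hqN : (N : ℝ) ≤ q := (le_max_right _ _).trans (hA.trans hAq)
  norm_cast at hq80 hqN
  have hpi := hN (2 * q ^ k) (hqN.trans ((Nat.le_self_pow hk q).trans (by omega)))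
  push_cast at hpi
  refine le_trans ?_ (pow_div_twenty_le_card_radicands hq hq80 hk (by linarith))
  rw [Real.rpow_mul hA0, Real.rpow_natCast]
  gcongr

theorem eventually_exists_finset_primes {δ : ℝ} (hδ : 0 < δ) (hδ2 : δ ≤ 1 / 2) :
    ∀ᶠ A : ℝ in atTop, ∃ Q : Finset ℕ, A ^ (1 - 2 * δ) / 2 ≤ #Q ∧ #Q ≤ A ^ (1 - 2 * δ) ∧
      ∀ q ∈ Q, q.Prime ∧ A ^ (1 - δ) < q ∧ q ≤ A := by
  filter_upwards [eventually_two_mul_rpow_le_primeCounting hδ (by linarith),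
    eventually_ge_atTop 1] with A hpi hA
  set T := (Nat.primesLE ⌊A⌋₊).filter fun q : ℕ ↦ A ^ (1 - δ) < q with hT
  set M := ⌊A ^ (1 - 2 * δ)⌋₊
  have hM : (M : ℝ) ≤ A ^ (1 - 2 * δ) := Nat.floor_le (by positivity)
  have hsmall : (#((Nat.primesLE ⌊A⌋₊).filter fun q : ℕ ↦ ¬A ^ (1 - δ) < q) : ℝ) ≤ A ^ (1 - δ) := by
    have hsub : ((Nat.primesLE ⌊A⌋₊).filter fun q : ℕ ↦ ¬A ^ (1 - δ) < q) ⊆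
        Ioc 0 ⌊A ^ (1 - δ)⌋₊ := by
      intro q hq
      rw [mem_filter, Nat.mem_primesLE, not_lt] at hq
      exact mem_Ioc.mpr ⟨hq.1.2.pos, Nat.le_floor hq.2⟩
    refine le_trans ?_ (Nat.floor_le (by positivity))
    exact_mod_cast (card_le_card hsub).trans (by rw [Nat.card_Ioc, Nat.sub_zero])
  have hMT : M ≤ #T := by
    have hsplit : (#T : ℝ) + #((Nat.primesLE ⌊A⌋₊).filter fun q : ℕ ↦ ¬A ^ (1 - δ) < q) =
        ⌊A⌋₊.primeCounting := by
      rw [← Nat.primesLE_card_eq_primeCounting]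
      exact_mod_cast card_filter_add_card_filter_not _
    have hexp : A ^ (1 - 2 * δ) ≤ A ^ (1 - δ) :=
      Real.rpow_le_rpow_of_exponent_le hA (by linarith)
    exact_mod_cast (show (M : ℝ) ≤ #T by linarith)
  obtain ⟨Q, hQT, hQ⟩ := exists_subset_card_eq hMT
  refine ⟨Q, ?_, hQ ▸ hM, fun q hq ↦ ?_⟩
  · have hlt : A ^ (1 - 2 * δ) < M + 1 := Nat.lt_floor_add_one _
    have hM1 : (1 : ℝ) ≤ M := by
      exact_mod_cast Nat.le_floor (by simpa using Real.one_le_rpow hA (by linarith))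
    rw [hQ]
    linarith
  · have hq' := hQT hq
    rw [hT, mem_filter, Nat.mem_primesLE, Nat.le_floor_iff (by linarith)] at hq'
    exact ⟨hq'.1.2, hq'.2, hq'.1.1⟩

theorem eventually_exists_finset_radicands {k : ℕ} (hk : k ≠ 0) {δ : ℝ} (hδ : 0 < δ)
    (hδ2 : δ ≤ 1 / 2) : ∀ᶠ A : ℝ in atTop, ∃ F : Finset ℤ,
      A ^ (1 - 2 * δ + (1 - δ) * k) / 80 ≤ #F ∧
        ∀ d ∈ F, ∃ q : ℕ, q.Prime ∧ A ^ (1 - δ) < q ∧ q ≤ A ∧ d ∈ radicands (q ^ k) := by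
  filter_upwards [eventually_exists_finset_primes hδ hδ2,
    eventually_rpow_div_twenty_le_card_radicands hk (show 0 < 1 - δ by linarith),
    eventually_card_radicands_inter_le hk (show (0 : ℝ) < 1 / 40 by norm_num) hδ,
    eventually_ge_atTop 1] with A ⟨Q, hQlow, hQup, hQ⟩ hcard hinter hA
  have hA0 : 0 < A := by linarith
  have hpair : (Q : Set ℕ).Pairwise fun p q ↦
      (#(radicands (p ^ k) ∩ radicands (q ^ k)) : ℝ) ≤ 1 / 40 * A ^ δ := by
    intro p hp q hq hpq
    obtain h | h := hpq.lt_or_gt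
    · rw [inter_comm]
      exact hinter p q (hQ p hp).1.pos h (hQ q hq).2.2
    · exact hinter q p (hQ q hq).1.pos h (hQ p hp).2.2
  have hunion := card_mul_sub_le_card_biUnion (by positivity)
    (fun q hq ↦ hcard q (hQ q hq).1 (hQ q hq).2.1.le) hpair
  have hloss : #Q * (1 / 40 * A ^ δ) ≤ A ^ ((1 - δ) * k) / 40 := by
    have hk1 : (1 : ℝ) ≤ k := mod_cast Nat.one_le_iff_ne_zero.mpr hk
    calc
      #Q * (1 / 40 * A ^ δ) ≤ A ^ (1 - 2 * δ) * (1 / 40 * A ^ δ) := by gcongr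
      _ = A ^ (1 - 2 * δ + δ) / 40 := by
        rw [Real.rpow_add hA0]
        ring
      _ ≤ A ^ ((1 - δ) * k) / 40 := by
        gcongr
        nlinarith
  refine ⟨Q.biUnion fun q ↦ radicands (q ^ k), ?_, fun d hd ↦ ?_⟩
  · calc
      A ^ (1 - 2 * δ + (1 - δ) * k) / 80 = A ^ (1 - 2 * δ) / 2 * (A ^ ((1 - δ) * k) / 40) := by
        rw [Real.rpow_add hA0]
        ring
      _ ≤ #Q * (A ^ ((1 - δ) * k) / 20 - #Q * (1 / 40 * A ^ δ)) := by
        gcongr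
        linarith
      _ ≤ _ := hunion
  · obtain ⟨q, hq, hd⟩ := mem_biUnion.mp hd
    obtain ⟨hp, hlow, hup⟩ := hQ q hq
    exact ⟨q, hp, hlow, hup, hd⟩

theorem eventually_rpow_le_ncard_goodOrderM {k : ℕ} (hk : k ≠ 0) {e : ℝ} (he : e < k + 1) :
    ∀ᶠ A : ℝ in atTop, ∀ X : ℝ, 8 * A ^ (2 * k) ≤ X →
      A ^ e ≤ {d : ℤ | GoodOrderM (4 * k) X d}.ncard := by
  obtain ⟨δ, hδ, hδ2, hδe⟩ : ∃ δ : ℝ, 0 < δ ∧ δ ≤ 1 / 2 ∧ e < 1 - 2 * δ + (1 - δ) * k := by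
    refine ⟨min (1 / 2) ((k + 1 - e) / (2 * (k + 2))), ?_, min_le_left _ _, ?_⟩
    · exact lt_min (by norm_num) (div_pos (by linarith) (by positivity))
    · have := (le_div_iff₀ (by positivity)).mp
        (min_le_right (1 / 2) (((k : ℝ) + 1 - e) / (2 * (k + 2))))
      linarith
  filter_upwards [eventually_exists_finset_radicands hk hδ hδ2,
    (tendsto_rpow_atTop (sub_pos.mpr hδe)).eventually_ge_atTop 80,
    (tendsto_rpow_atTop (show 0 < 1 - δ by linarith)).eventually_ge_atTop 5,
    eventually_gt_atTop 0] with A ⟨F, hF, hFd⟩ h80 h5 hA0 X hX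
  have hsub : (F : Set ℤ) ⊆ {d | GoodOrderM (4 * k) X d} := by
    intro d hd
    obtain ⟨q, hq, hlow, hup, hdq⟩ := hFd d hd
    have hq5 : (5 : ℝ) ≤ q := h5.trans hlow.le
    refine goodOrderM_of_mem_radicands hq (mod_cast hq5) hk (le_trans ?_ hX) hdq
    gcongr
  calc
    A ^ e = A ^ e * 80 / 80 := by ring
    _ ≤ A ^ e * A ^ (1 - 2 * δ + (1 - δ) * k - e) / 80 := by gcongr
    _ = A ^ (1 - 2 * δ + (1 - δ) * k) / 80 := by rw [← Real.rpow_add hA0, add_sub_cancel]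
    _ ≤ #F := hF
    _ ≤ _ := by
      rw [← Set.ncard_coe_finset]
      exact_mod_cast Set.ncard_le_ncard hsub (finite_setOf_goodOrderM _ _)

theorem eventually_div_eight_rpow_le_ncard_goodOrderM {k : ℕ} (hk : k ≠ 0) {s : ℝ}
    (hs : s < 1 / 2 + 1 / (2 * k)) :
    ∀ᶠ X : ℝ in atTop, (X / 8) ^ s ≤ {d : ℤ | GoodOrderM (4 * k) X d}.ncard := by
  have hs' : 2 * k * s < k + 1 := by
    calc
      2 * k * s < 2 * k * (1 / 2 + 1 / (2 * k)) := by gcongr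
      _ = k + 1 := by field_simp
  have htendsto : Tendsto (fun X : ℝ ↦ (X / 8) ^ (((2 * k : ℕ) : ℝ)⁻¹)) atTop atTop :=
    (tendsto_rpow_atTop (by positivity)).comp (tendsto_id.atTop_div_const (by norm_num))
  filter_upwards [htendsto.eventually (eventually_rpow_le_ncard_goodOrderM hk hs'),
    eventually_ge_atTop 0] with X hX hX0
  calc
    (X / 8) ^ s = ((X / 8) ^ (((2 * k : ℕ) : ℝ)⁻¹)) ^ (2 * k * s) := by
      rw [← Real.rpow_mul (by positivity)]
      push_cast
      field_simp
    _ ≤ _ := hX X (by rw [Real.rpow_inv_natCast_pow (by positivity) (by positivity)]; linarith)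

end Counting

/-- Soundararajan: for `m ≡ 0 (mod 4)`, there are `≫ X^(1/2 + 2/m - ε)` imaginary
quadratic fields with `|d_k| ≤ X` whose class group contains an element of order `m`. -/
theorem count_imag_quad_order_m_zero_mod_four (m : ℕ) (hm : 1 < m) (hm4 : m % 4 = 0)
    (ε : ℝ) (hε : 0 < ε) :
    ∃ c : ℝ, 0 < c ∧ ∃ X₀ : ℝ, ∀ X : ℝ, X₀ ≤ X →
      c * X ^ ((1 : ℝ) / 2 + 2 / (m : ℝ) - ε) ≤ ({d : ℤ | GoodOrderM m X d}.ncard : ℝ) := by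
  obtain ⟨k, rfl⟩ := Nat.dvd_of_mod_eq_zero hm4
  have hk : k ≠ 0 := by omega
  have hexp : (1 : ℝ) / 2 + 2 / (4 * k : ℕ) - ε < 1 / 2 + 1 / (2 * k) := by
    calc
      (1 : ℝ) / 2 + 2 / (4 * k : ℕ) - ε < 1 / 2 + 2 / (4 * k : ℕ) := sub_lt_self _ hε
      _ = 1 / 2 + 1 / (2 * k) := by
        push_cast
        ring
  obtain ⟨X₀, hX₀⟩ := Filter.eventually_atTop.mp <|
    (eventually_div_eight_rpow_le_ncard_goodOrderM hk hexp).and (Filter.eventually_ge_atTop 0)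
  refine ⟨((8 : ℝ) ^ ((1 : ℝ) / 2 + 2 / (4 * k : ℕ) - ε))⁻¹, by positivity, X₀, fun X hX ↦ ?_⟩
  obtain ⟨hcard, hX0⟩ := hX₀ X hX
  rwa [inv_mul_eq_div, ← Real.div_rpow hX0 (by norm_num)]
end

section
/- For every integer m > 1, there are infinitely many imaginary quadratic number fields whose class number is divisible by m; that is, the set of negative squarefree integers d such that m divides the cardinality of the ideal class group Cl(ℚ(√d)) is infinite. -/
open NumberField

/-!
Let `c` be an odd multiple of `3` with `c > m`, put `N = c ^ m`, and let `ω` be a root of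
`X ^ 2 - X + N`, which generates `ℚ(√(1 - 4N))`. The conjugates `ω` and `1 - ω` are coprime with
product `c ^ m`, so `(ω) = I ^ m` for an ideal `I`. The class of `I` has order exactly `m` unless
`ω = ± β ^ p` for an integer `β` and a prime `p ∣ m`. In that case the trace `± 1` of `β ^ p` is a
Dickson polynomial in the trace of `β`, and a congruence modulo the square of the norm of `β`, which
is a power of `c`, excludes it.

Distinct `c` may give the same field, so infinitude is obtained by varying `m` instead: each field
has finite class number and hence serves only finitely many multiples of `m`.
-/

section Dickson

open Polynomial

variable {R : Type*} [CommRing R]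

lemma dvd_eval_dickson_one_of_odd (b t : R) {n : ℕ} (hn : Odd n) :
    t ∣ (dickson 1 b n).eval t := by
  obtain ⟨k, rfl⟩ := hn
  induction k with
  | zero => simp
  | succ k ih =>
    rw [show 2 * (k + 1) + 1 = 2 * k + 1 + 2 by ring, dickson_add_two]
    simpa using dvd_sub (dvd_mul_right t _) (ih.mul_left b)

lemma dvd_eval_dickson_one_sub_pow (b t : R) (n : ℕ) :
    b ∣ (dickson 1 b (n + 1)).eval t - t ^ (n + 1) := by
  induction n with
  | zero => simp
  | succ n ih =>
    obtain ⟨q, hq⟩ := ih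
    refine ⟨t * q - (dickson 1 b n).eval t, ?_⟩
    simp only [dickson_add_two, eval_sub, eval_mul, eval_X, eval_C]
    linear_combination t * hq

lemma sq_dvd_eval_dickson_one_sub (b t : R) (n : ℕ) :
    b ^ 2 ∣ (dickson 1 b (n + 2)).eval t - (t ^ (n + 2) - (n + 2) * b * t ^ n) := by
  induction n with
  | zero =>
    convert dvd_zero (b ^ 2) using 1
    simp only [zero_add, dickson_two, eval_sub, eval_mul, eval_pow, eval_X, eval_C, eval_ofNat,
      Nat.cast_one, eval_one]
    push_cast
    ring
  | succ n ih =>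
    obtain ⟨q, hq⟩ := ih
    obtain ⟨r, hr⟩ := dvd_eval_dickson_one_sub_pow b t n
    refine ⟨t * q - r, ?_⟩
    simp only [dickson_add_two _ _ (n + 1), eval_sub, eval_mul, eval_X, eval_C]
    push_cast
    linear_combination t * hq - b * hr

lemma sq_emod_four_ne_three (t : ℤ) : t ^ 2 % 4 ≠ 3 := by
  rcases Int.even_or_odd' t with ⟨j, rfl | rfl⟩ <;> ring_nf <;> omega

lemma not_isUnit_eval_dickson_one_of_odd {b : ℤ} (t : ℤ) {n : ℕ} (hn : Odd n) (hn1 : n ≠ 1)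
    (hnb : n < b) : ¬ IsUnit ((dickson 1 b n).eval t) := by
  intro hD
  have ht : IsUnit t := isUnit_of_dvd_unit (dvd_eval_dickson_one_of_odd b t hn) hD
  have ht2 : t ^ 2 = 1 := by rcases Int.isUnit_iff.1 ht with rfl | rfl <;> norm_num
  obtain ⟨k, rfl⟩ : ∃ k, n = 2 * k + 1 + 2 := by
    obtain ⟨j, rfl⟩ := hn
    exact ⟨j - 1, by omega⟩
  set D := (dickson 1 b (2 * k + 1 + 2)).eval t
  obtain ⟨q, hq⟩ : b ^ 2 ∣ D - t * (1 - (2 * k + 3) * b) := by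
    have htk : t ^ (2 * k + 1) = t := by rw [pow_succ, pow_mul, ht2, one_pow, one_mul]
    have h := sq_dvd_eval_dickson_one_sub b t (2 * k + 1)
    rw [pow_add, htk, ht2] at h
    push_cast at h
    rwa [show t * 1 - (2 * k + 1 + 2) * b * t = t * (1 - (2 * k + 3) * b) by ring] at h
  have hDt : D = t := by
    have hdvd : b ∣ D - t := ⟨b * q - t * (2 * k + 3), by linear_combination hq⟩
    refine sub_eq_zero.1 (Int.eq_zero_of_abs_lt_dvd hdvd ?_)
    rcases Int.isUnit_iff.1 hD with h | h <;> rcases Int.isUnit_iff.1 ht with h' | h' <;>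
      rw [h, h'] <;> norm_num <;> omega
  have hbn : b ∣ t * (2 * k + 3) :=
    ⟨q, mul_left_cancel₀ (by omega : b ≠ 0) (by linear_combination hq - hDt)⟩
  have := Int.le_of_dvd (by omega) (ht.dvd_mul_left.1 hbn)
  omega

lemma not_isUnit_eval_dickson_one_two {b : ℤ} (hb : Odd b) (h3 : 3 ∣ b) (t : ℤ) :
    ¬ IsUnit ((dickson 1 b 2).eval t) := by
  have hD : (dickson 1 b 2).eval t = t ^ 2 - 2 * b := by
    simp only [dickson_two, eval_sub, eval_mul, eval_pow, eval_X, eval_C, eval_ofNat,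
      Nat.cast_one, eval_one]
    ring
  have hmod4 : t ^ 2 % 4 ≠ 3 := sq_emod_four_ne_three t
  have hmod3 : t ^ 2 % 3 ≠ 2 := by
    have : t % 3 = 0 ∨ t % 3 = 1 ∨ t % 3 = 2 := by omega
    rcases this with h | h | h <;> simp [sq, Int.mul_emod, h]
  rw [hD, Int.isUnit_iff]
  obtain ⟨j, rfl⟩ := hb
  omega

lemma not_isUnit_eval_dickson_one_of_prime {b : ℤ} (hb : Odd b) (h3 : 3 ∣ b) (t : ℤ) {p : ℕ}
    (hp : p.Prime) (hpb : p < b) : ¬ IsUnit ((dickson 1 b p).eval t) := by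
  rcases hp.eq_two_or_odd' with rfl | hodd
  · exact not_isUnit_eval_dickson_one_two hb h3 t
  · exact not_isUnit_eval_dickson_one_of_odd t hodd hp.ne_one hpb

end Dickson

section QuadraticAlgebra

open QuadraticAlgebra Polynomial

lemma four_mul_norm_eq {R : Type*} [CommRing R] {a b : R} (z : QuadraticAlgebra R a b) :
    4 * z.norm = z.trace ^ 2 - (b ^ 2 + 4 * a) * z.im ^ 2 := by
  rw [norm_def, trace_def]
  ring

lemma trace_pow_eq_eval_dickson {R : Type*} [CommRing R] {a b : R} (z : QuadraticAlgebra R a b) :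
    ∀ n : ℕ, (z ^ n).trace = (dickson 1 z.norm n).eval z.trace
  | 0 => by
    simp only [pow_zero, trace_one, dickson_zero, Nat.cast_one, eval_sub, eval_ofNat, eval_one]
    norm_num
  | 1 => by simp
  | n + 2 => by
    have hz : z ^ (n + 2) = z.trace • z ^ (n + 1) - z.norm • z ^ n := by
      rw [pow_add, sq_eq_trace_smul_sub_norm, Algebra.smul_def, Algebra.smul_def, Algebra.smul_def]
      ring
    rw [hz, map_sub, map_smul, map_smul, trace_pow_eq_eval_dickson z n,
      trace_pow_eq_eval_dickson z (n + 1)]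
    simp

lemma isSquare_mul_of_eq_mul_sq {F : Type*} [Field F] {k δ y : F} (hk : k ≠ 0)
    (h : k = δ * y ^ 2) : IsSquare (k * δ) := by
  have hy : y ≠ 0 := by
    rintro rfl
    exact hk (by rw [h, zero_pow two_ne_zero, mul_zero])
  refine ⟨k / y, ?_⟩
  field_simp
  rw [h]

section OrderedField

variable {F : Type*} [Field F] [LinearOrder F] [IsStrictOrderedRing F] {a b : F}

lemma sq_ne_add_mul_of_discrim_neg (hΔ : b ^ 2 + 4 * a < 0) (r : F) : r ^ 2 ≠ a + b * r := by
  intro hr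
  nlinarith [sq_nonneg (2 * r - b)]

lemma norm_nonneg_of_discrim_neg (hΔ : b ^ 2 + 4 * a < 0) (z : QuadraticAlgebra F a b) :
    0 ≤ z.norm := by
  nlinarith [four_mul_norm_eq z, sq_nonneg z.trace, sq_nonneg z.im]

end OrderedField

section Integral

lemma isIntegral_star {R A : Type*} [CommRing R] [CommRing A] [Algebra R A] {a b : A}
    {z : QuadraticAlgebra A a b} (hz : IsIntegral R z) : IsIntegral R (star z) :=
  hz.map_of_comp_eq (RingHom.id R) (starRingEnd (QuadraticAlgebra A a b)) (by
    ext r <;> simp [IsScalarTower.algebraMap_apply R A (QuadraticAlgebra A a b),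
      starRingEnd_apply])

variable {R F : Type*} [CommRing R] [IsIntegrallyClosed R] [Field F] [Algebra R F]
  [IsFractionRing R F] {a b : F} {z : QuadraticAlgebra F a b}

lemma exists_algebraMap_eq_of_isIntegral {r : F}
    (hr : IsIntegral R (algebraMap F (QuadraticAlgebra F a b) r)) : ∃ s : R, algebraMap R F s = r :=
  IsIntegrallyClosed.isIntegral_iff.1 ((isIntegral_algebraMap_iff algebraMap_injective).1 hr)

lemma exists_algebraMap_eq_trace (hz : IsIntegral R z) : ∃ t : R, algebraMap R F t = z.trace :=
  exists_algebraMap_eq_of_isIntegral (a := a) (b := b)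
    (algebraMap_trace_eq_add_star z ▸ hz.add (isIntegral_star hz))

lemma exists_algebraMap_eq_norm (hz : IsIntegral R z) : ∃ n : R, algebraMap R F n = z.norm :=
  exists_algebraMap_eq_of_isIntegral (a := a) (b := b)
    (algebraMap_norm_eq_mul_star z ▸ hz.mul (isIntegral_star hz))

end Integral

section Rational

variable {a b : ℚ}

lemma norm_eq_one_of_isIntegral_of_mul_eq_one (hΔ : b ^ 2 + 4 * a < 0)
    {z w : QuadraticAlgebra ℚ a b} (hz : IsIntegral ℤ z) (hw : IsIntegral ℤ w) (hzw : z * w = 1) :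
    z.norm = 1 := by
  obtain ⟨n, hn⟩ := exists_algebraMap_eq_norm hz
  obtain ⟨n', hn'⟩ := exists_algebraMap_eq_norm hw
  rw [eq_intCast] at hn hn'
  have hnn' : n * n' = 1 := by
    have h := congrArg QuadraticAlgebra.norm hzw
    rw [map_mul, map_one, ← hn, ← hn'] at h
    exact_mod_cast h
  have hn0 : 0 ≤ n := by
    have h := norm_nonneg_of_discrim_neg hΔ z
    rw [← hn] at h
    exact_mod_cast h
  rw [← hn, Int.eq_one_of_mul_eq_one_right hn0 hnn', Int.cast_one]

lemma sq_trace_eq_four_of_isIntegral_of_norm_eq_one (hΔ : b ^ 2 + 4 * a < 0)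
    (hsq : ¬ IsSquare (-(b ^ 2 + 4 * a))) (hsq3 : ¬ IsSquare (3 * -(b ^ 2 + 4 * a)))
    {z : QuadraticAlgebra ℚ a b} (hz : IsIntegral ℤ z) (hnorm : z.norm = 1) : z.trace ^ 2 = 4 := by
  obtain ⟨t, ht⟩ := exists_algebraMap_eq_trace hz
  rw [eq_intCast] at ht
  have hdiff : 4 - (t : ℚ) ^ 2 = -(b ^ 2 + 4 * a) * z.im ^ 2 := by
    have := four_mul_norm_eq z
    rw [hnorm, ← ht] at this
    linear_combination this
  have ht4 : t ^ 2 ≤ 2 ^ 2 := by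
    have : (t : ℚ) ^ 2 ≤ 2 ^ 2 := by nlinarith [sq_nonneg z.im]
    exact_mod_cast this
  obtain ⟨hlow, hupp⟩ := abs_le_of_sq_le_sq' ht4 zero_le_two
  rw [← ht]
  have : t = 0 ∨ t ^ 2 = 1 ∨ t ^ 2 = 4 := by interval_cases t <;> simp
  rcases this with rfl | h | h
  · rw [← one_mul (-_)] at hsq
    refine absurd (isSquare_mul_of_eq_mul_sq one_ne_zero (y := z.im / 2) ?_) hsq
    rw [Int.cast_zero] at hdiff
    linear_combination hdiff / 4
  · have h' : (t : ℚ) ^ 2 = 1 := by exact_mod_cast h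
    refine absurd (isSquare_mul_of_eq_mul_sq three_ne_zero (y := z.im) ?_) hsq3
    linear_combination hdiff + h'
  · exact_mod_cast h

lemma eq_one_or_neg_one_of_mul_eq_one (hΔ : b ^ 2 + 4 * a < 0)
    (hsq : ¬ IsSquare (-(b ^ 2 + 4 * a))) (hsq3 : ¬ IsSquare (3 * -(b ^ 2 + 4 * a)))
    {z w : QuadraticAlgebra ℚ a b} (hz : IsIntegral ℤ z) (hw : IsIntegral ℤ w) (hzw : z * w = 1) :
    z = 1 ∨ z = -1 := by
  have hnorm : z.norm = 1 := norm_eq_one_of_isIntegral_of_mul_eq_one hΔ hz hw hzw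
  have htrace : z.trace ^ 2 = 4 :=
    sq_trace_eq_four_of_isIntegral_of_norm_eq_one hΔ hsq hsq3 hz hnorm
  have him : z.im = 0 := by
    have : (b ^ 2 + 4 * a) * z.im ^ 2 = 0 := by
      linear_combination htrace - 4 * hnorm + four_mul_norm_eq z
    exact (pow_eq_zero_iff two_ne_zero).1 ((mul_eq_zero_iff_left hΔ.ne).1 this)
  have hre : z.re = 1 ∨ z.re = -1 := by
    rw [← sq_eq_one_iff, ← hnorm, norm_def, him]
    ring
  exact hre.imp (fun h ↦ by ext <;> simp [him, h]) (fun h ↦ by ext <;> simp [him, h])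

lemma sq_trace_pow_ne_one (hΔ : b ^ 2 + 4 * a < 0) {c : ℤ} (hc : Odd c) (h3 : 3 ∣ c) {p k : ℕ}
    (hp : p.Prime) (hpc : p < c) (hk : k ≠ 0) {z : QuadraticAlgebra ℚ a b} (hz : IsIntegral ℤ z)
    (hnorm : (z ^ p).norm = (c : ℚ) ^ (k * p)) : (z ^ p).trace ^ 2 ≠ 1 := by
  obtain ⟨t, ht⟩ := exists_algebraMap_eq_trace hz
  rw [eq_intCast] at ht
  have hc0 : 0 ≤ c := by omega
  have hzc : z.norm = ((c ^ k : ℤ) : ℚ) := by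
    refine (pow_left_inj₀ (norm_nonneg_of_discrim_neg hΔ z) (by positivity) hp.ne_zero).1 ?_
    rw [← map_pow, hnorm]
    push_cast
    rw [pow_mul]
  have htrace : (z ^ p).trace = ((dickson 1 (c ^ k) p).eval t : ℤ) := by
    rw [trace_pow_eq_eval_dickson, hzc, ← ht, ← eq_intCast (Int.castRingHom ℚ) (c ^ k),
      ← map_dickson, eval_intCast_map, eq_intCast, Int.cast_id]
  have hck : c ≤ c ^ k := le_self_pow₀ (by have := hp.pos; omega) hk
  have hD := not_isUnit_eval_dickson_one_of_prime (hc.pow (n := k)) (dvd_pow h3 hk) t hp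
    (hpc.trans_le hck)
  rw [htrace]
  exact fun h ↦ hD (IsUnit.of_pow_eq_one (by exact_mod_cast h) two_ne_zero)

end Rational

lemma exists_algEquiv_omega_eq {F K : Type*} [Field F] [Field K] [Algebra F K]
    (hK : Module.finrank F K = 2) {a b : F} [Fact (∀ r : F, r ^ 2 ≠ a + b * r)] {u : K}
    (hu : u * u = a • 1 + b • u) : ∃ e : QuadraticAlgebra F a b ≃ₐ[F] K, e ω = u := by
  let f : QuadraticAlgebra F a b →ₐ[F] K := lift ⟨u, hu⟩
  have : FiniteDimensional F K := Module.finite_of_finrank_pos (by omega)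
  have hinj : Function.Injective f := f.toRingHom.injective
  have hsurj : Function.Surjective f :=
    (LinearMap.injective_iff_surjective_of_finrank_eq_finrank (f := f.toLinearMap)
      (by rw [hK, finrank_eq_two])).1 hinj
  refine ⟨AlgEquiv.ofBijective f ⟨hinj, hsurj⟩, ?_⟩
  change f ω = u
  simp [f]

end QuadraticAlgebra

section Dedekind

variable {R : Type*} [CommRing R] [IsDedekindDomain R]

open nonZeroDivisors

lemma orderOf_mk0_eq_of_pow_eq_span {I : (Ideal R)⁰} {x : R} {m : ℕ} (hm : m ≠ 0)
    (hI : (I : Ideal R) ^ m = Ideal.span {x})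
    (hx : ∀ p : ℕ, p.Prime → p ∣ m → ∀ y : R, ¬ Associated (y ^ p) x) :
    orderOf (ClassGroup.mk0 I) = m := by
  have mk0_pow_eq_one_iff (k : ℕ) :
      ClassGroup.mk0 I ^ k = 1 ↔ ((I : Ideal R) ^ k).IsPrincipal := by
    rw [← map_pow]
    exact ClassGroup.mk0_eq_one_iff (I ^ k).2
  refine orderOf_eq_of_pow_and_pow_div_prime (Nat.pos_of_ne_zero hm) ?_ fun p hp hpm hone ↦ ?_
  · rw [mk0_pow_eq_one_iff, hI]
    exact ⟨x, rfl⟩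
  · obtain ⟨y, hy⟩ := (mk0_pow_eq_one_iff _).1 hone
    refine hx p hp hpm y (Ideal.span_singleton_eq_span_singleton.1 ?_)
    rw [← Ideal.span_singleton_pow, ← hI]
    conv_rhs => rw [← Nat.div_mul_cancel hpm, pow_mul, hy]

lemma dvd_natCard_classGroup_of_mul_eq_pow {x y c : R} {m : ℕ} (hm : m ≠ 0) (hx0 : x ≠ 0)
    (hxy : IsCoprime x y) (hmul : x * y = c ^ m)
    (hx : ∀ p : ℕ, p.Prime → p ∣ m → ∀ z : R, ¬ Associated (z ^ p) x) :
    m ∣ Nat.card (ClassGroup R) := by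
  obtain ⟨I, hI⟩ : ∃ I : Ideal R, Ideal.span {x} = I ^ m := by
    refine exists_eq_pow_of_mul_eq_pow_of_coprime (c := Ideal.span {c})
      ((Ideal.isCoprime_span_singleton_iff x y).2 hxy) ?_
    rw [Ideal.span_singleton_mul_span_singleton, Ideal.span_singleton_pow, hmul]
  have hI0 : I ≠ 0 := by
    rintro rfl
    rw [zero_pow hm, Ideal.zero_eq_bot, Ideal.span_singleton_eq_bot] at hI
    exact hx0 hI
  rw [← orderOf_mk0_eq_of_pow_eq_span (I := ⟨I, mem_nonZeroDivisors_of_ne_zero hI0⟩) hm hI.symm hx]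
  exact orderOf_dvd_natCard _

end Dedekind

section ImaginaryQuadratic

lemma not_associated_pow_of_trace_eq_one {S : Type*} [CommRing S] [Algebra.IsIntegral ℤ S]
    {a b : ℚ} (g : S →+* QuadraticAlgebra ℚ a b) (hΔ : b ^ 2 + 4 * a < 0)
    (hsq : ¬ IsSquare (-(b ^ 2 + 4 * a))) (hsq3 : ¬ IsSquare (3 * -(b ^ 2 + 4 * a)))
    {c : ℤ} (hc : Odd c) (h3 : 3 ∣ c) {p k : ℕ} (hp : p.Prime) (hpc : p < c) (hk : k ≠ 0) {x : S}
    (htrace : (g x).trace = 1) (hnorm : (g x).norm = (c : ℚ) ^ (k * p)) (y : S) :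
    ¬ Associated (y ^ p) x := by
  rintro ⟨ε, rfl⟩
  have isIntegral_map (s : S) : IsIntegral ℤ (g s) :=
    map_isIntegral_int g (Algebra.IsIntegral.isIntegral s)
  have hε : g ε = 1 ∨ g ε = -1 :=
    eq_one_or_neg_one_of_mul_eq_one hΔ hsq hsq3 (isIntegral_map ε) (isIntegral_map ↑ε⁻¹)
      (by rw [← map_mul, Units.mul_inv, map_one])
  rw [map_mul, map_pow] at htrace hnorm
  refine sq_trace_pow_ne_one hΔ hc h3 hp hpc hk (isIntegral_map y) ?_ ?_
  · rcases hε with h | h <;> simpa [h] using hnorm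
  · rcases hε with h | h <;> rw [h] at htrace
    · rw [mul_one] at htrace
      rw [htrace, one_pow]
    · rw [mul_neg_one, map_neg] at htrace
      rw [← neg_sq, htrace, one_pow]

lemma not_isSquare_four_mul_sub_one (N : ℤ) : ¬ IsSquare (4 * N - 1) := by
  rintro ⟨r, hr⟩
  have := sq_emod_four_ne_three r
  rw [sq, ← hr] at this
  omega

lemma not_isSquare_three_mul_four_mul_sub_one {N : ℤ} (h3 : 3 ∣ N) :
    ¬ IsSquare (3 * (4 * N - 1)) := by
  rintro ⟨r, hr⟩
  obtain ⟨s, rfl⟩ : 3 ∣ r :=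
    Int.prime_three.dvd_of_dvd_pow (n := 2) ⟨4 * N - 1, by rw [hr, sq]⟩
  have : 4 * N - 1 = 3 * (s * s) := by linarith
  omega

lemma isIntegral_of_mul_self_eq_sub {R A : Type*} [CommRing R] [Ring A] [Algebra R A] {u : A}
    {N : R} (hu : u * u = u - algebraMap R A N) : IsIntegral R u := by
  refine ⟨Polynomial.X ^ 2 - Polynomial.X + Polynomial.C N, by monicity!, ?_⟩
  simp [sq, hu]

lemma not_associated_pow_of_map_eq_omega {S : Type*} [CommRing S] [Algebra.IsIntegral ℤ S]
    {m : ℕ} (hm : m ≠ 0) {c : ℤ} (hc : Odd c) (h3 : 3 ∣ c) (hmc : m < c)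
    (g : S →+* QuadraticAlgebra ℚ (-(c : ℚ) ^ m) 1) {x : S} (hx : g x = QuadraticAlgebra.omega)
    {p : ℕ} (hp : p.Prime) (hpm : p ∣ m) (y : S) : ¬ Associated (y ^ p) x := by
  have hN : 0 < c ^ m := pow_pos (by omega) m
  have hpm' : p ≤ m := Nat.le_of_dvd (by omega) hpm
  have hΔ : -((1 : ℚ) ^ 2 + 4 * -(c : ℚ) ^ m) = ((4 * c ^ m - 1 : ℤ) : ℚ) := by
    push_cast
    ring
  refine not_associated_pow_of_trace_eq_one g ?_ ?_ ?_ hc h3 hp (by omega)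
    (Nat.div_pos hpm' hp.pos).ne' ?_ ?_ y
  · rw [← neg_pos, hΔ]
    exact_mod_cast (by omega : 0 < 4 * c ^ m - 1)
  · rw [hΔ, Rat.isSquare_intCast_iff]
    exact not_isSquare_four_mul_sub_one _
  · rw [hΔ, ← Int.cast_ofNat, ← Int.cast_mul, Rat.isSquare_intCast_iff]
    exact not_isSquare_three_mul_four_mul_sub_one (dvd_pow h3 hm)
  · rw [hx, QuadraticAlgebra.trace_omega]
  · rw [hx, Nat.div_mul_cancel hpm]
    simp [QuadraticAlgebra.norm_def]

theorem dvd_natCard_classGroup_of_sq_eq {K : Type*} [Field K] [NumberField K]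
    (hK : Module.finrank ℚ K = 2) {m : ℕ} (hm : m ≠ 0) {c : ℤ} (hc : Odd c) (h3 : 3 ∣ c)
    (hmc : m < c) {x : K} (hx : x ^ 2 = 1 - 4 * c ^ m) : m ∣ Nat.card (ClassGroup (𝓞 K)) := by
  have hN : 0 < c ^ m := pow_pos (by omega) m
  have hΔ : (1 : ℚ) ^ 2 + 4 * -(c : ℚ) ^ m < 0 := by
    exact_mod_cast (by omega : 1 + 4 * -c ^ m < 0)
  obtain ⟨u, hu⟩ : ∃ u : K, u * u = u - c ^ m := ⟨(1 + x) / 2, by linear_combination hx / 4⟩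
  obtain ⟨ω, rfl⟩ : ∃ ω : 𝓞 K, (ω : K) = u :=
    ⟨⟨u, isIntegral_of_mul_self_eq_sub (N := c ^ m) (by simp [hu])⟩, rfl⟩
  have : Fact (∀ r : ℚ, r ^ 2 ≠ -(c : ℚ) ^ m + 1 * r) := ⟨sq_ne_add_mul_of_discrim_neg hΔ⟩
  obtain ⟨e, he⟩ := exists_algEquiv_omega_eq hK (a := -(c : ℚ) ^ m) (b := 1) (u := (ω : K))
    (by
      rw [hu, neg_smul, one_smul, Algebra.smul_def, mul_one, map_pow, map_intCast]
      ring)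
  have hmul : ω * (1 - ω) = (c : 𝓞 K) ^ m := by
    apply RingOfIntegers.ext
    simp only [map_mul, map_sub, map_one, map_pow, map_intCast]
    linear_combination -hu
  have hω0 : ω ≠ 0 := by
    rintro rfl
    have : c ^ m = 0 := by simpa using hmul.symm
    omega
  let g : 𝓞 K →+* QuadraticAlgebra ℚ (-(c : ℚ) ^ m) 1 :=
    (e.symm : K →+* _).comp (algebraMap (𝓞 K) K)
  exact dvd_natCard_classGroup_of_mul_eq_pow hm hω0 ⟨1, 1, by ring⟩ hmul fun p hp hpm ↦
    not_associated_pow_of_map_eq_omega hm hc h3 hmc g (e.symm_apply_eq.2 he.symm) hp hpm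

/-- `m` divides the class number of `ℚ(√d)`, encoded as every number field of degree `2` that
contains a square root of `d`. This reading requires `d` not to be a square: for a square the
condition ranges over all quadratic fields. -/
def DvdQuadraticClassNumber (m : ℕ) (d : ℤ) : Prop :=
  ∀ (K : Type) [Field K] [NumberField K],
    (∃ x : K, x * x = (d : K)) → Module.finrank ℚ K = 2 → m ∣ Nat.card (ClassGroup (𝓞 K))

lemma exists_squarefree_dvdQuadraticClassNumber {m : ℕ} (hm : m ≠ 0) :
    ∃ d : ℤ, (d < 0 ∧ Squarefree d) ∧ DvdQuadraticClassNumber m d := by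
  have hN : 0 < (3 ^ m) ^ m := by positivity
  obtain ⟨d, f, hd, -, hdf, hsq⟩ :=
    Nat.sq_mul_squarefree_of_pos (n := 4 * (3 ^ m) ^ m - 1) (by omega)
  refine ⟨-d, ⟨by omega, ?_⟩, fun K _ _ ⟨x, hx⟩ hK ↦ ?_⟩
  · rwa [← Int.squarefree_natAbs, Int.natAbs_neg, Int.natAbs_natCast]
  · have hfd : (f : K) ^ 2 * d + 1 = 4 * (3 ^ m) ^ m := by
      exact_mod_cast (by omega : f ^ 2 * d + 1 = 4 * (3 ^ m) ^ m)
    refine dvd_natCard_classGroup_of_sq_eq hK hm (c := 3 ^ m) (x := f * x) (Odd.pow (by decide))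
      (dvd_pow_self 3 hm) (by exact_mod_cast Nat.lt_pow_self (by norm_num)) ?_
    push_cast at hx ⊢
    linear_combination (f : K) ^ 2 * hx - hfd

lemma exists_numberField_finrank_eq_two {d : ℤ} (hd : d < 0) :
    ∃ (K : Type) (_ : Field K) (_ : NumberField K),
      (∃ x : K, x * x = (d : K)) ∧ Module.finrank ℚ K = 2 := by
  have hΔ : (0 : ℚ) ^ 2 + 4 * d < 0 := by
    have : (d : ℚ) < 0 := by exact_mod_cast hd
    linarith
  have : Fact (∀ r : ℚ, r ^ 2 ≠ (d : ℚ) + 0 * r) := ⟨sq_ne_add_mul_of_discrim_neg hΔ⟩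
  have : CharZero (QuadraticAlgebra ℚ (d : ℚ) 0) := algebraRat.charZero _
  refine ⟨QuadraticAlgebra ℚ (d : ℚ) 0, inferInstance, ?_, ⟨⟨0, 1⟩, ?_⟩, ?_⟩
  · constructor
  · ext <;> simp
  · convert QuadraticAlgebra.finrank_eq_two (R := ℚ) (d : ℚ) 0

lemma bddAbove_setOf_dvdQuadraticClassNumber {d : ℤ} (hd : d < 0) :
    BddAbove {m | DvdQuadraticClassNumber m d} := by
  obtain ⟨K, _, _, hx, hK⟩ := exists_numberField_finrank_eq_two hd
  exact ⟨Nat.card (ClassGroup (𝓞 K)), fun m hm ↦ Nat.le_of_dvd Nat.card_pos (hm K hx hK)⟩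

end ImaginaryQuadratic

lemma infinite_setOf_of_bddAbove {α : Type*} {S : Set α} {P : ℕ → α → Prop}
    (hdvd : ∀ ⦃m n a⦄, m ∣ n → P n a → P m a) (hbdd : ∀ a ∈ S, BddAbove {n | P n a})
    (hex : ∀ n ≠ 0, ∃ a ∈ S, P n a) {m : ℕ} (hm : m ≠ 0) : {a ∈ S | P m a}.Infinite := by
  intro hfin
  obtain ⟨M, hM⟩ := (hfin.bddAbove_biUnion (S := fun a ↦ {n | P n a})).2 fun a ha ↦ hbdd a ha.1
  obtain ⟨a, haS, ha⟩ := hex (m * (M + 1)) (by positivity)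
  have haM : m * (M + 1) ≤ M :=
    hM (Set.mem_biUnion (show a ∈ {a ∈ S | P m a} from ⟨haS, hdvd (dvd_mul_right m _) ha⟩) ha)
  exact (Nat.lt_of_lt_of_le M.lt_succ_self (Nat.le_mul_of_pos_left _ (by omega))).not_ge haM

/-- Nagell: for every integer `m > 1`, there are infinitely many imaginary quadratic
fields whose class number is divisible by `m`; i.e. the set of negative squarefree
integers `d` such that `m` divides the class number of `ℚ(√d)` (characterized as a
degree-2 number field containing a square root of `d`) is infinite. -/
theorem infinitely_many_imag_quad_class_number_divisible (m : ℕ) (hm : 1 < m) :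
    {d : ℤ | d < 0 ∧ Squarefree d ∧
      ∀ (K : Type) [Field K] [NumberField K],
        (∃ x : K, x * x = (d : K)) → Module.finrank ℚ K = 2 →
          m ∣ Nat.card (ClassGroup (𝓞 K))}.Infinite := by
  have h := infinite_setOf_of_bddAbove (S := {d : ℤ | d < 0 ∧ Squarefree d})
    (P := DvdQuadraticClassNumber) (fun _ _ _ hmn hn K _ _ hx hK ↦ hmn.trans (hn K hx hK))
    (fun _ hd ↦ bddAbove_setOf_dvdQuadraticClassNumber hd.1)
    (fun _ hn ↦ exists_squarefree_dvdQuadraticClassNumber hn) (m := m) (by omega)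
  simpa only [Set.mem_ofPred_eq, and_assoc, DvdQuadraticClassNumber] using h
end

section
/- For every t ∈ ℚ, there exists c ∈ ℚ such that the discriminant Δ of the Weierstrass curve E_t : y² = x³ − (2t²−2t+1)(4t⁴−12t³+6t²+2t−1)x² + 16(t²−3t+1)(t−1)⁵t⁵x satisfies Δ = (2t−1)(4t²−2t−1) · c²; that is, the discriminant of E_t is congruent to Δ₁₀(t) = (2t−1)(4t²−2t−1) modulo squares of rational numbers. -/
/-- The universal elliptic curve over `X₁(10)`:
`E_t : y² = x³ − (2t²−2t+1)(4t⁴−12t³+6t²+2t−1)x² + 16(t²−3t+1)(t−1)⁵t⁵ x`. -/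
noncomputable def Et (t : ℚ) : WeierstrassCurve ℚ where
  a₁ := 0
  a₂ := -(2*t^2 - 2*t + 1) * (4*t^4 - 12*t^3 + 6*t^2 + 2*t - 1)
  a₃ := 0
  a₄ := 16 * (t^2 - 3*t + 1) * (t - 1)^5 * t^5
  a₆ := 0

section

variable {R : Type*} [CommRing R]

/- The cubic is `x * (x ^ 2 + a₂ * x + a₄)`: the factor `a₄ ^ 2` is the squared resultant of its two
factors, and `a₂ ^ 2 - 4 * a₄` is the discriminant of the quadratic one. -/
theorem weierstrassCurve_Δ_of_a₆_eq_zero (W : WeierstrassCurve R) [W.IsCharNeTwoNF]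
    (ha₆ : W.a₆ = 0) : W.Δ = 16 * W.a₄ ^ 2 * (W.a₂ ^ 2 - 4 * W.a₄) := by
  rw [W.Δ_of_isCharNeTwoNF, ha₆]
  ring

/-- The universal curve `E_t` over `X₁(10)` with its parameter `t` in an arbitrary commutative ring,
by the same equation as `Et`. No value of `t` is excluded, so the curve may be singular. -/
def universalCurveX₁Ten (t : R) : WeierstrassCurve R where
  a₁ := 0
  a₂ := -(2 * t ^ 2 - 2 * t + 1) * (4 * t ^ 4 - 12 * t ^ 3 + 6 * t ^ 2 + 2 * t - 1)
  a₃ := 0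
  a₄ := 16 * (t ^ 2 - 3 * t + 1) * (t - 1) ^ 5 * t ^ 5
  a₆ := 0

instance universalCurveX₁Ten_isCharNeTwoNF (t : R) : (universalCurveX₁Ten t).IsCharNeTwoNF where
  a₁ := rfl
  a₃ := rfl

theorem universalCurveX₁Ten_a₂_sq_sub_four_mul_a₄ (t : R) :
    (universalCurveX₁Ten t).a₂ ^ 2 - 4 * (universalCurveX₁Ten t).a₄ =
      (2 * t - 1) ^ 5 * (4 * t ^ 2 - 2 * t - 1) := by
  simp only [universalCurveX₁Ten]
  ring

theorem Et_discriminant_mod_squares_general (t : R) :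
    ∃ c : R, (universalCurveX₁Ten t).Δ = (2 * t - 1) * (4 * t ^ 2 - 2 * t - 1) * c ^ 2 := by
  refine ⟨4 * (universalCurveX₁Ten t).a₄ * (2 * t - 1) ^ 2, ?_⟩
  rw [weierstrassCurve_Δ_of_a₆_eq_zero _ rfl, universalCurveX₁Ten_a₂_sq_sub_four_mul_a₄]
  ring

end

theorem Et_eq_universalCurveX₁Ten (t : ℚ) : Et t = universalCurveX₁Ten t := rfl

/-- The discriminant of `E_t` is `Δ₁₀(t) = (2t−1)(4t²−2t−1)` modulo rational squares. -/
theorem Et_discriminant_mod_squares (t : ℚ) :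
    ∃ c : ℚ, (Et t).Δ = (2*t - 1) * (4*t^2 - 2*t - 1) * c^2 := by
  rw [Et_eq_universalCurveX₁Ten]
  exact Et_discriminant_mod_squares_general t
end

section
/- Let (t,u,z) ∈ ℚ³ satisfy (2t−1)⁵(4t²−2t−1)z² = (2u−1)⁵(4u²−2u−1), with t,u ∉ {0, 1/2, 1}. Then a₆(t,u,z) ≠ 0, where a₆ is the polynomial defined in the context. -/
/-!
Modulo the relation, `a₆` collapses to `64 z u⁵ (u - 1)⁵ (u² - 3u + 1)`. Both quadratics in sight
are values of the golden ratio polynomial `x² - x - 1`: `4u² - 2u - 1` at `x = 2u` and `u² - 3u + 1`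
at `x = u - 1`. It has discriminant `5`, so neither vanishes when `5` is not a square; the first
fact forces `z ≠ 0` through the relation, and the second gives `a₆ ≠ 0`.
-/

section CommRing

variable {R : Type*} [CommRing R]

/-- The polynomial `(2x - 1)⁵(4x² - 2x - 1)`, in terms of which the relation between `t`, `u` and
`z` reads `septic t * z ^ 2 = septic u`. -/
def septic (x : R) : R :=
  (2 * x - 1) ^ 5 * (4 * x ^ 2 - 2 * x - 1)

/-- The coefficient `a₆(t,u,z)`, over an arbitrary commutative ring. -/
def a6 (t u z : R) : R :=
  z * (-128 * t ^ 7 * z ^ 2 + 384 * t ^ 6 * z ^ 2 - 448 * t ^ 5 * z ^ 2 + 240 * t ^ 4 * z ^ 2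
    - 40 * t ^ 3 * z ^ 2 - 16 * t ^ 2 * z ^ 2 + 8 * t * z ^ 2 + 64 * u ^ 12 - 512 * u ^ 11
    + 1664 * u ^ 10 - 2880 * u ^ 9 + 2880 * u ^ 8 - 1536 * u ^ 7 + 128 * u ^ 6 + 384 * u ^ 5
    - 240 * u ^ 4 + 40 * u ^ 3 + 16 * u ^ 2 - 8 * u - z ^ 2 + 1)

theorem a6_eq_of_septic_mul_sq_eq {t u z : R} (hrel : septic t * z ^ 2 = septic u) :
    a6 t u z = 2 ^ 6 * z * u ^ 5 * (u - 1) ^ 5 * (u ^ 2 - 3 * u + 1) := by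
  unfold septic at hrel
  unfold a6
  linear_combination -z * hrel

theorem two_ne_zero_of_not_isSquare_five (h5 : ¬IsSquare (5 : R)) : (2 : R) ≠ 0 :=
  fun h2 => h5 ⟨1, by linear_combination 2 * h2⟩

theorem sq_sub_self_sub_one_ne_zero (h5 : ¬IsSquare (5 : R)) (x : R) : x ^ 2 - x - 1 ≠ 0 :=
  fun hx => h5 ⟨2 * x - 1, by linear_combination -4 * hx⟩

theorem septic_ne_zero [NoZeroDivisors R] (h5 : ¬IsSquare (5 : R)) {x : R} (hx : 2 * x ≠ 1) :
    septic x ≠ 0 := by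
  have hgolden : 4 * x ^ 2 - 2 * x - 1 ≠ 0 := by
    convert sq_sub_self_sub_one_ne_zero h5 (2 * x) using 1
    ring
  exact mul_ne_zero (pow_ne_zero 5 (sub_ne_zero.mpr hx)) hgolden

theorem a6_ne_zero_general [NoZeroDivisors R] (h5 : ¬IsSquare (5 : R)) {t u z : R}
    (hrel : septic t * z ^ 2 = septic u) (hu0 : u ≠ 0) (huhalf : 2 * u ≠ 1) (hu1 : u ≠ 1) :
    a6 t u z ≠ 0 := by
  have hz : z ≠ 0 := by
    rintro rfl
    exact septic_ne_zero h5 huhalf (by simpa using hrel.symm)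
  have h2 : (2 : R) ≠ 0 := two_ne_zero_of_not_isSquare_five h5
  have hu1' : u - 1 ≠ 0 := sub_ne_zero.mpr hu1
  have hgolden : u ^ 2 - 3 * u + 1 ≠ 0 := by
    convert sq_sub_self_sub_one_ne_zero h5 (u - 1) using 1
    ring
  rw [a6_eq_of_septic_mul_sq_eq hrel]
  simp [h2, hz, hu0, hu1', hgolden]

end CommRing

theorem not_isSquare_five_rat : ¬IsSquare (5 : ℚ) :=
  Rat.isSquare_ofNat_iff.not.mpr Nat.prime_five.prime.not_isSquare

/-- If `(t,u,z) ∈ ℚ³` satisfies `(2t−1)⁵(4t²−2t−1)z² = (2u−1)⁵(4u²−2u−1)` and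
`t, u ∉ {0, 1/2, 1}`, then the coefficient `a₆(t,u,z)` is nonzero. -/
theorem a6_ne_zero (t u z : ℚ)
    (hrel : (2*t - 1)^5 * (4*t^2 - 2*t - 1) * z^2 = (2*u - 1)^5 * (4*u^2 - 2*u - 1))
    (ht0 : t ≠ 0) (hthalf : t ≠ 1/2) (ht1 : t ≠ 1)
    (hu0 : u ≠ 0) (huhalf : u ≠ 1/2) (hu1 : u ≠ 1) :
    z * (-128*t^7*z^2 + 384*t^6*z^2 - 448*t^5*z^2 + 240*t^4*z^2 - 40*t^3*z^2
      - 16*t^2*z^2 + 8*t*z^2 + 64*u^12 - 512*u^11 + 1664*u^10 - 2880*u^9 + 2880*u^8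
      - 1536*u^7 + 128*u^6 + 384*u^5 - 240*u^4 + 40*u^3 + 16*u^2 - 8*u - z^2 + 1) ≠ 0 :=
  a6_ne_zero_general not_isSquare_five_rat hrel hu0 (fun h => huhalf (by linarith)) hu1
end
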